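/- Consider the (α,β,γ)-metric F(x,y) = α·e^{β/α} + γ on U × (ℝⁿ∖{0}). Assume √(b²(x)) < 1 and √(g²(x)) < e^{−1} for all x ∈ U (so F > 0 and F is a Finsler metric with invertible fundamental tensor), and assume that the 1-form β is nowhere zero on U (i.e. (b_i(x)) ≠ 0 for every x). Let G^i be the spray coefficients of F. If (U,F) is a Douglas space, i.e. for every x ∈ U and all indices i,j the function y ↦ G^i(x,y)y^j − G^j(x,y)y^i on ℝⁿ∖{0} is the restriction of a homogeneous polynomial of degree three in y, then β is parallel with respect to α, i.e. b_{i|j} = 0 on U for all i,j, and γ is closed, i.e. ^γs_{ij} = 0 on U for all i,j (equivalently ∂γ_i/∂x^j = ∂γ_j/∂x^i). -/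

import Mathlib

noncomputable section

open Set

/-- `a^{ij} u_i v_j` : the pairing of two covectors via the inverse matrix. -/
def quadInv {n : ℕ} (a : Matrix (Fin n) (Fin n) ℝ) (u v : Fin n → ℝ) : ℝ :=
  ∑ i, ∑ j, a⁻¹ i j * u i * v j

/-- `α(y) = √(a_{ij} y^i y^j)`. -/
def alph {n : ℕ} (a : Matrix (Fin n) (Fin n) ℝ) (y : Fin n → ℝ) : ℝ :=
  Real.sqrt (∑ i, ∑ j, a i j * y i * y j)

/-- `v_i y^i`. -/
def oneForm {n : ℕ} (v y : Fin n → ℝ) : ℝ := ∑ i, v i * y i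

/-- `s(y) = v_i y^i / α(y)`. -/
def sVar {n : ℕ} (a : Matrix (Fin n) (Fin n) ℝ) (v y : Fin n → ℝ) : ℝ :=
  oneForm v y / alph a y

/-- The (α,β,γ)-metric `F(y) = α·Ψ(s, s̄)`. -/
def Fm {n : ℕ} (a : Matrix (Fin n) (Fin n) ℝ) (bv gv : Fin n → ℝ)
    (Ψ : ℝ → ℝ → ℝ) (y : Fin n → ℝ) : ℝ :=
  alph a y * Ψ (sVar a bv y) (sVar a gv y)

/-- Partial derivative of a function on `ℝⁿ` in the `i`-th coordinate direction. -/
def pd {n : ℕ} (f : (Fin n → ℝ) → ℝ) (y : Fin n → ℝ) (i : Fin n) : ℝ :=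
  fderiv ℝ f y (Pi.single i 1)

/-- Second partial derivative. -/
def pd2 {n : ℕ} (f : (Fin n → ℝ) → ℝ) (y : Fin n → ℝ) (i j : Fin n) : ℝ :=
  pd (fun z => pd f z j) y i

/-- Partial derivative with respect to the first slot (`∂/∂s`). -/
def Ds (Ψ : ℝ → ℝ → ℝ) : ℝ → ℝ → ℝ := fun p q => deriv (fun u => Ψ u q) p

/-- Partial derivative with respect to the second slot (`∂/∂s̄`). -/
def Dt (Ψ : ℝ → ℝ → ℝ) : ℝ → ℝ → ℝ := fun p q => deriv (fun v => Ψ p v) q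

/-- `h_i = v_i − s·α_i`. -/
def hl {n : ℕ} (a : Matrix (Fin n) (Fin n) ℝ) (v y : Fin n → ℝ) (i : Fin n) : ℝ :=
  v i - sVar a v y * pd (alph a) y i

/-- Fundamental tensor `g_{ij} = ½ ∂²(F²)/∂yⁱ∂yʲ`. -/
def fundT {n : ℕ} (F : (Fin n → ℝ) → ℝ) (y : Fin n → ℝ) (i j : Fin n) : ℝ :=
  (1 / 2) * pd2 (fun z => F z ^ 2) y i j

/-- `Π = Ψ − sΨ_s − s̄Ψ_s̄`. -/
def PiF (Ψ : ℝ → ℝ → ℝ) (p q : ℝ) : ℝ := Ψ p q - p * Ds Ψ p q - q * Dt Ψ p q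

/-- `J = (Ψ_ss Ψ_s̄s̄ − Ψ_ss̄²)/Π`. -/
def JF (Ψ : ℝ → ℝ → ℝ) (p q : ℝ) : ℝ :=
  (Ds (Ds Ψ) p q * Dt (Dt Ψ) p q - Dt (Ds Ψ) p q ^ 2) / PiF Ψ p q

/-- `Γ`, with `B = b²`, `G = g²`, `Θ = θ` as real parameters. -/
def GammaF (Ψ : ℝ → ℝ → ℝ) (B G Θ p q : ℝ) : ℝ :=
  PiF Ψ p q + (B - p ^ 2) * Ds (Ds Ψ) p q + (G - q ^ 2) * Dt (Dt Ψ) p q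
    + 2 * (Θ - p * q) * Dt (Ds Ψ) p q
    + ((B - p ^ 2) * (G - q ^ 2) - (Θ - p * q) ^ 2) * JF Ψ p q

/-- `ρ = Ψ(Ψ − sΨ_s − s̄Ψ_s̄)`. -/
def rhoF (Ψ : ℝ → ℝ → ℝ) : ℝ → ℝ → ℝ := fun p q => Ψ p q * PiF Ψ p q

/-- `ρ₀ = ΨΨ_ss + Ψ_s²`. -/
def rho0F (Ψ : ℝ → ℝ → ℝ) : ℝ → ℝ → ℝ := fun p q => Ψ p q * Ds (Ds Ψ) p q + Ds Ψ p q ^ 2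

/-- `ρ̄₀ = ΨΨ_s̄s̄ + Ψ_s̄²`. -/
def rhobar0F (Ψ : ℝ → ℝ → ℝ) : ℝ → ℝ → ℝ := fun p q => Ψ p q * Dt (Dt Ψ) p q + Dt Ψ p q ^ 2

/-- `ρ₃ = ΨΨ_ss̄ + Ψ_sΨ_s̄`. -/
def rho3F (Ψ : ℝ → ℝ → ℝ) : ℝ → ℝ → ℝ :=
  fun p q => Ψ p q * Dt (Ds Ψ) p q + Ds Ψ p q * Dt Ψ p q

/-- `ρ₁ = ΨΨ_s − sρ₀ − s̄ρ₃`. -/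
def rho1F (Ψ : ℝ → ℝ → ℝ) : ℝ → ℝ → ℝ :=
  fun p q => Ψ p q * Ds Ψ p q - p * rho0F Ψ p q - q * rho3F Ψ p q

/-- `ρ̄₁ = ΨΨ_s̄ − s̄ρ̄₀ − sρ₃`. -/
def rhobar1F (Ψ : ℝ → ℝ → ℝ) : ℝ → ℝ → ℝ :=
  fun p q => Ψ p q * Dt Ψ p q - q * rhobar0F Ψ p q - p * rho3F Ψ p q

/-- `ρ₂ = −sρ₁ − s̄ρ̄₁`. -/
def rho2F (Ψ : ℝ → ℝ → ℝ) : ℝ → ℝ → ℝ :=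
  fun p q => -p * rho1F Ψ p q - q * rhobar1F Ψ p q

/-- `π₁ = Ψ_s̄Ψ_ss̄ − Ψ_sΨ_s̄s̄ + sΨJ`. -/
def pi1F (Ψ : ℝ → ℝ → ℝ) (p q : ℝ) : ℝ :=
  Dt Ψ p q * Dt (Ds Ψ) p q - Ds Ψ p q * Dt (Dt Ψ) p q + p * Ψ p q * JF Ψ p q

/-- `π₂ = Ψ_sΨ_ss̄ − Ψ_s̄Ψ_ss + s̄ΨJ`. -/
def pi2F (Ψ : ℝ → ℝ → ℝ) (p q : ℝ) : ℝ :=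
  Ds Ψ p q * Dt (Ds Ψ) p q - Dt Ψ p q * Ds (Ds Ψ) p q + q * Ψ p q * JF Ψ p q


/-- Christoffel symbols `Γ^k_{ij}` of the Riemannian metric `a_{ij}(x)`. -/
def chr {n : ℕ} (a : (Fin n → ℝ) → Matrix (Fin n) (Fin n) ℝ) (x : Fin n → ℝ)
    (k i j : Fin n) : ℝ :=
  (1 / 2) * ∑ l, (a x)⁻¹ k l *
    (pd (fun z => a z j l) x i + pd (fun z => a z i l) x j - pd (fun z => a z i j) x l)

/-- Geodesic coefficients `^αG^i = ½ Γ^i_{jk} y^j y^k` of `α`. -/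
def alphaG {n : ℕ} (a : (Fin n → ℝ) → Matrix (Fin n) (Fin n) ℝ) (x y : Fin n → ℝ)
    (i : Fin n) : ℝ :=
  (1 / 2) * ∑ j, ∑ k, chr a x i j k * y j * y k

/-- Covariant derivative `v_{i|j}` of a 1-form `v` with respect to `α`. -/
def covD {n : ℕ} (a : (Fin n → ℝ) → Matrix (Fin n) (Fin n) ℝ)
    (v : (Fin n → ℝ) → Fin n → ℝ) (x : Fin n → ℝ) (i j : Fin n) : ℝ :=
  pd (fun z => v z i) x j - ∑ k, v x k * chr a x k i j

/-- `r_{ij} = ½(v_{i|j} + v_{j|i})`. -/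
def rSym {n : ℕ} (a : (Fin n → ℝ) → Matrix (Fin n) (Fin n) ℝ)
    (v : (Fin n → ℝ) → Fin n → ℝ) (x : Fin n → ℝ) (i j : Fin n) : ℝ :=
  (1 / 2) * (covD a v x i j + covD a v x j i)

/-- `s_{ij} = ½(v_{i|j} − v_{j|i})`. -/
def sSym {n : ℕ} (a : (Fin n → ℝ) → Matrix (Fin n) (Fin n) ℝ)
    (v : (Fin n → ℝ) → Fin n → ℝ) (x : Fin n → ℝ) (i j : Fin n) : ℝ :=
  (1 / 2) * (covD a v x i j - covD a v x j i)

/-- `r_{00} = r_{ij} y^i y^j`. -/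
def r00 {n : ℕ} (a : (Fin n → ℝ) → Matrix (Fin n) (Fin n) ℝ)
    (v : (Fin n → ℝ) → Fin n → ℝ) (x y : Fin n → ℝ) : ℝ :=
  ∑ i, ∑ j, rSym a v x i j * y i * y j

/-- `s_{j0} = s_{jk} y^k`. -/
def s0low {n : ℕ} (a : (Fin n → ℝ) → Matrix (Fin n) (Fin n) ℝ)
    (v : (Fin n → ℝ) → Fin n → ℝ) (x y : Fin n → ℝ) (j : Fin n) : ℝ :=
  ∑ k, sSym a v x j k * y k

/-- `s^i_0 = a^{ij} s_{j0}`. -/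
def sUp0 {n : ℕ} (a : (Fin n → ℝ) → Matrix (Fin n) (Fin n) ℝ)
    (v : (Fin n → ℝ) → Fin n → ℝ) (x y : Fin n → ℝ) (i : Fin n) : ℝ :=
  ∑ j, (a x)⁻¹ i j * s0low a v x y j

/-- Contraction `w_i · (s of v)^i_0`. -/
def contrS {n : ℕ} (a : (Fin n → ℝ) → Matrix (Fin n) (Fin n) ℝ)
    (v w : (Fin n → ℝ) → Fin n → ℝ) (x y : Fin n → ℝ) : ℝ :=
  ∑ i, w x i * sUp0 a v x y i

/-- Fundamental tensor of `F(x,·)` as a matrix. -/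
def gmatF {n : ℕ} (F : (Fin n → ℝ) → (Fin n → ℝ) → ℝ) (x y : Fin n → ℝ) :
    Matrix (Fin n) (Fin n) ℝ :=
  Matrix.of fun i j => fundT (F x) y i j

/-- Spray coefficients `G^i = ¼ g^{il}(∂g_{jl}/∂x^k + ∂g_{lk}/∂x^j − ∂g_{jk}/∂x^l) y^j y^k`. -/
def sprayF {n : ℕ} (F : (Fin n → ℝ) → (Fin n → ℝ) → ℝ) (x y : Fin n → ℝ) (i : Fin n) : ℝ :=
  (1 / 4) * ∑ l, (gmatF F x y)⁻¹ i l *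
    ∑ j, ∑ k, (pd (fun z => gmatF F z y j l) x k
        + pd (fun z => gmatF F z y l k) x j
        - pd (fun z => gmatF F z y j k) x l) * y j * y k


/-! ### One-variable calculus -/

lemma hasDerivAt_core1 {E β γ : ℝ → ℝ} {E' β' γ' : ℝ} (hE : HasDerivAt E E' 0)
    (hβ : HasDerivAt β β' 0) (hγ : HasDerivAt γ γ' 0) (h0 : 0 < E 0) :
    HasDerivAt (fun t => Real.sqrt (E t) * Real.exp (β t / Real.sqrt (E t)) + γ t)
      (Real.exp (β 0 / Real.sqrt (E 0)) * ((1 - β 0 / Real.sqrt (E 0)) *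
        (E' / (2 * Real.sqrt (E 0))) + β') + γ') 0 := by
  have hs : 0 < Real.sqrt (E 0) := Real.sqrt_pos.2 h0
  have h1 := hE.sqrt h0.ne'
  have h2 := (hβ.div h1 hs.ne').exp
  have h3 := (h1.mul h2).add hγ
  refine h3.congr_deriv ?_
  simp only [Pi.div_apply]
  field_simp
  ring

lemma hasDerivAt_core2 {E β ω bl gl : ℝ → ℝ} {E' β' ω' bl' gl' : ℝ} (hE : HasDerivAt E E' 0)
    (hβ : HasDerivAt β β' 0) (hω : HasDerivAt ω ω' 0) (hbl : HasDerivAt bl bl' 0)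
    (hgl : HasDerivAt gl gl' 0) (h0 : 0 < E 0) :
    HasDerivAt (fun t => Real.exp (β t / Real.sqrt (E t)) * ((1 - β t / Real.sqrt (E t)) *
        (ω t / Real.sqrt (E t)) + bl t) + gl t)
      (Real.exp (β 0 / Real.sqrt (E 0)) *
        ((β' - β 0 / Real.sqrt (E 0) * (E' / (2 * Real.sqrt (E 0)))) / Real.sqrt (E 0) *
          (bl 0 - β 0 / Real.sqrt (E 0) * (ω 0 / Real.sqrt (E 0)))
        + (1 - β 0 / Real.sqrt (E 0)) * (ω' / Real.sqrt (E 0)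
            - ω 0 * E' / (2 * Real.sqrt (E 0) ^ 3)) + bl') + gl') 0 := by
  have hs : 0 < Real.sqrt (E 0) := Real.sqrt_pos.2 h0
  have h1 := hE.sqrt h0.ne'
  have hq := hβ.div h1 hs.ne'
  have h2 := hq.exp
  have h3 := (h2.mul (((hq.const_sub 1).mul (hω.div h1 hs.ne')).add hbl)).add hgl
  refine h3.congr_deriv ?_
  simp only [Pi.div_apply, Pi.mul_apply, Pi.add_apply]
  field_simp
  ring

/-! ### The metric at a fixed point -/

/-- lowered vector -/
def low {n : ℕ} (A : Matrix (Fin n) (Fin n) ℝ) (y : Fin n → ℝ) (l : Fin n) : ℝ :=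
  ∑ m, A l m * y m

/-- squared length -/
def nsq {n : ℕ} (A : Matrix (Fin n) (Fin n) ℝ) (y : Fin n → ℝ) : ℝ :=
  ∑ i, ∑ j, A i j * y i * y j

/-- the metric -/
def Ff {n : ℕ} (A : Matrix (Fin n) (Fin n) ℝ) (b g w : Fin n → ℝ) : ℝ :=
  alph A w * Real.exp (oneForm b w / alph A w) + oneForm g w

/-- first derivative -/
def F1 {n : ℕ} (A : Matrix (Fin n) (Fin n) ℝ) (b g w : Fin n → ℝ) (l : Fin n) : ℝ :=
  Real.exp (oneForm b w / alph A w) * ((1 - oneForm b w / alph A w) *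
        (low A w l / alph A w) + b l) + g l

/-- second derivative -/
def F2 {n : ℕ} (A : Matrix (Fin n) (Fin n) ℝ) (b w : Fin n → ℝ) (l k : Fin n) : ℝ :=
  Real.exp (oneForm b w / alph A w) *
    ((b k - oneForm b w / alph A w * (low A w k / alph A w)) / alph A w *
      (b l - oneForm b w / alph A w * (low A w l / alph A w))
     + (1 - oneForm b w / alph A w) * (A l k / alph A w
        - low A w l * low A w k / alph A w ^ 3))

lemma oneForm_add {n : ℕ} (b y v : Fin n → ℝ) : oneForm b (y + v) = oneForm b y + oneForm b v := by
  simp [oneForm, mul_add, Finset.sum_add_distrib]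

lemma oneForm_smul {n : ℕ} (b y : Fin n → ℝ) (t : ℝ) : oneForm b (t • y) = t * oneForm b y := by
  simp only [oneForm, Pi.smul_apply, smul_eq_mul, Finset.mul_sum]
  exact Finset.sum_congr rfl fun i _ => by ring

lemma low_add {n : ℕ} (A : Matrix (Fin n) (Fin n) ℝ) (y v : Fin n → ℝ) (l : Fin n) :
    low A (y + v) l = low A y l + low A v l := oneForm_add (A l) y v

lemma low_smul {n : ℕ} (A : Matrix (Fin n) (Fin n) ℝ) (y : Fin n → ℝ) (t : ℝ) (l : Fin n) :
    low A (t • y) l = t * low A y l := oneForm_smul (A l) y t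

lemma nsq_eq {n : ℕ} (A : Matrix (Fin n) (Fin n) ℝ) (y : Fin n → ℝ) :
    nsq A y = oneForm (low A y) y := by
  simp only [nsq, oneForm, low, Finset.sum_mul]
  exact Finset.sum_congr rfl fun i _ => Finset.sum_congr rfl fun j _ => by ring

lemma oneForm_add_left {n : ℕ} (b c y : Fin n → ℝ) :
    oneForm (fun i => b i + c i) y = oneForm b y + oneForm c y := by
  simp [oneForm, add_mul, Finset.sum_add_distrib]

lemma oneForm_smul_left {n : ℕ} (b y : Fin n → ℝ) (t : ℝ) :
    oneForm (fun i => t * b i) y = t * oneForm b y := by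
  simp only [oneForm, Finset.mul_sum]
  exact Finset.sum_congr rfl fun i _ => by ring

lemma low_comm {n : ℕ} {A : Matrix (Fin n) (Fin n) ℝ} (hA : ∀ i j, A i j = A j i)
    (y v : Fin n → ℝ) : oneForm (low A y) v = oneForm (low A v) y := by
  simp only [oneForm, low, Finset.sum_mul]
  rw [Finset.sum_comm]
  refine Finset.sum_congr rfl fun i _ => Finset.sum_congr rfl fun j _ => ?_
  rw [hA j i]; ring

lemma nsq_add {n : ℕ} {A : Matrix (Fin n) (Fin n) ℝ} (hA : ∀ i j, A i j = A j i)
    (y v : Fin n → ℝ) : nsq A (y + v) = nsq A y + 2 * oneForm (low A y) v + nsq A v := by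
  have h : low A (y + v) = fun i => low A y i + low A v i := funext fun l => low_add A y v l
  rw [nsq_eq, nsq_eq, nsq_eq, h, oneForm_add_left, oneForm_add, oneForm_add,
    low_comm hA v y]
  ring

lemma nsq_smul {n : ℕ} (A : Matrix (Fin n) (Fin n) ℝ) (y : Fin n → ℝ) (t : ℝ) :
    nsq A (t • y) = t ^ 2 * nsq A y := by
  have h : low A (t • y) = fun i => t * low A y i := funext fun l => low_smul A y t l
  rw [nsq_eq, nsq_eq, h, oneForm_smul_left, oneForm_smul]; ring

lemma alph_eq {n : ℕ} (A : Matrix (Fin n) (Fin n) ℝ) (y : Fin n → ℝ) :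
    alph A y = Real.sqrt (nsq A y) := rfl

lemma posDef_symm {n : ℕ} {A : Matrix (Fin n) (Fin n) ℝ} (hA : A.PosDef) (i j : Fin n) :
    A i j = A j i := by
  have := hA.isHermitian.apply i j
  simpa using this.symm

lemma nsq_pos {n : ℕ} {A : Matrix (Fin n) (Fin n) ℝ} (hA : A.PosDef) {y : Fin n → ℝ}
    (hy : y ≠ 0) : 0 < nsq A y := by
  have h := hA.dotProduct_mulVec_pos hy
  have h2 : nsq A y = star y ⬝ᵥ (A.mulVec y) := by
    simp only [nsq, dotProduct, Matrix.mulVec, Pi.star_apply, star_trivial, Finset.mul_sum]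
    exact Finset.sum_congr rfl fun i _ => Finset.sum_congr rfl fun j _ => by ring
  rw [h2]; exact h

lemma alph_pos {n : ℕ} {A : Matrix (Fin n) (Fin n) ℝ} (hA : A.PosDef) {y : Fin n → ℝ}
    (hy : y ≠ 0) : 0 < alph A y := Real.sqrt_pos.2 (nsq_pos hA hy)

lemma alph_sq {n : ℕ} {A : Matrix (Fin n) (Fin n) ℝ} (hA : A.PosDef) {y : Fin n → ℝ}
    (hy : y ≠ 0) : alph A y ^ 2 = nsq A y := Real.sq_sqrt (nsq_pos hA hy).le

lemma oneForm_single {n : ℕ} (b : Fin n → ℝ) (k : Fin n) : oneForm b (Pi.single k 1) = b k := by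
  simp [oneForm, Pi.single_apply]

lemma low_single {n : ℕ} (A : Matrix (Fin n) (Fin n) ℝ) (l k : Fin n) :
    low A (Pi.single k 1) l = A l k := oneForm_single (A l) k

lemma hasDerivAt_oneForm {n : ℕ} (b y v : Fin n → ℝ) :
    HasDerivAt (fun t : ℝ => oneForm b (y + t • v)) (oneForm b v) 0 := by
  simp only [oneForm_add, oneForm_smul]
  simpa using ((hasDerivAt_id (0:ℝ)).mul_const (oneForm b v)).const_add (oneForm b y)

lemma hasDerivAt_nsq {n : ℕ} {A : Matrix (Fin n) (Fin n) ℝ} (hA : ∀ i j, A i j = A j i)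
    (y v : Fin n → ℝ) :
    HasDerivAt (fun t : ℝ => nsq A (y + t • v)) (2 * oneForm (low A y) v) 0 := by
  simp only [nsq_add hA, oneForm_smul, nsq_smul]
  have h := ((((hasDerivAt_id (0:ℝ)).mul_const (oneForm (low A y) v)).const_mul 2).const_add
    (nsq A y)).add (((hasDerivAt_id (0:ℝ)).pow 2).mul_const (nsq A v))
  refine h.congr_deriv ?_
  simp

lemma differentiable_oneForm {n : ℕ} (b : Fin n → ℝ) : Differentiable ℝ (oneForm b) := by
  unfold oneForm; fun_prop

lemma differentiable_low {n : ℕ} (A : Matrix (Fin n) (Fin n) ℝ) (l : Fin n) :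
    Differentiable ℝ (fun w => low A w l) := by
  unfold low; fun_prop

lemma differentiable_nsq {n : ℕ} (A : Matrix (Fin n) (Fin n) ℝ) : Differentiable ℝ (nsq A) := by
  unfold nsq; fun_prop

lemma differentiableAt_alph {n : ℕ} {A : Matrix (Fin n) (Fin n) ℝ} (hA : A.PosDef) {y : Fin n → ℝ}
    (hy : y ≠ 0) : DifferentiableAt ℝ (alph A) y :=
  (differentiable_nsq A y).sqrt (nsq_pos hA hy).ne'

lemma differentiableAt_Ff {n : ℕ} {A : Matrix (Fin n) (Fin n) ℝ} (hA : A.PosDef)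
    (b g : Fin n → ℝ) {y : Fin n → ℝ} (hy : y ≠ 0) : DifferentiableAt ℝ (Ff A b g) y := by
  have h1 := differentiableAt_alph hA hy
  have h2 := differentiable_oneForm b y
  have h3 := differentiable_oneForm g y
  have h4 := (alph_pos hA hy).ne'
  unfold Ff
  fun_prop (disch := assumption)

lemma differentiableAt_F1 {n : ℕ} {A : Matrix (Fin n) (Fin n) ℝ} (hA : A.PosDef)
    (b g : Fin n → ℝ) {y : Fin n → ℝ} (hy : y ≠ 0) (l : Fin n) :
    DifferentiableAt ℝ (fun w => F1 A b g w l) y := by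
  have h1 := differentiableAt_alph hA hy
  have h2 := differentiable_oneForm b y
  have h3 := differentiable_low A l y
  have h4 := (alph_pos hA hy).ne'
  unfold F1
  fun_prop (disch := assumption)

lemma fderiv_eq_of_line {n : ℕ} {f : (Fin n → ℝ) → ℝ} {x v : Fin n → ℝ} {c : ℝ}
    (hf : DifferentiableAt ℝ f x) (h : HasDerivAt (fun t : ℝ => f (x + t • v)) c 0) :
    fderiv ℝ f x v = c :=
  (hf.hasFDerivAt.hasLineDerivAt v).unique h

lemma line_of_fderiv {n : ℕ} {f : (Fin n → ℝ) → ℝ} {x : Fin n → ℝ} (v : Fin n → ℝ)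
    (hf : DifferentiableAt ℝ f x) :
    HasDerivAt (fun t : ℝ => f (x + t • v)) (fderiv ℝ f x v) 0 :=
  hf.hasFDerivAt.hasLineDerivAt v

lemma pd_Ff {n : ℕ} {A : Matrix (Fin n) (Fin n) ℝ} (hA : A.PosDef)
    (b g : Fin n → ℝ) {y : Fin n → ℝ} (hy : y ≠ 0) (l : Fin n) :
    pd (Ff A b g) y l = F1 A b g y l := by
  refine fderiv_eq_of_line (differentiableAt_Ff hA b g hy) ?_
  have h := hasDerivAt_core1 (hasDerivAt_nsq (posDef_symm hA) y (Pi.single l 1))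
    (hasDerivAt_oneForm b y (Pi.single l 1)) (hasDerivAt_oneForm g y (Pi.single l 1))
    (by simpa using nsq_pos hA hy)
  refine h.congr_deriv ?_
  simp only [zero_smul, add_zero, oneForm_single, F1, alph_eq]
  rw [mul_div_mul_left _ _ two_ne_zero]

lemma pd_F1 {n : ℕ} {A : Matrix (Fin n) (Fin n) ℝ} (hA : A.PosDef)
    (b g : Fin n → ℝ) {y : Fin n → ℝ} (hy : y ≠ 0) (l k : Fin n) :
    pd (fun w => F1 A b g w l) y k = F2 A b y l k := by
  refine fderiv_eq_of_line (differentiableAt_F1 hA b g hy l) ?_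
  have h := hasDerivAt_core2 (hasDerivAt_nsq (posDef_symm hA) y (Pi.single k 1))
    (hasDerivAt_oneForm b y (Pi.single k 1)) (hasDerivAt_oneForm (A l) y (Pi.single k 1))
    (hasDerivAt_const 0 (b l)) (hasDerivAt_const 0 (g l))
    (by simpa using nsq_pos hA hy)
  refine h.congr_deriv ?_
  simp only [zero_smul, add_zero, oneForm_single, F2, alph_eq]
  have h2 : oneForm (A l) y = low A y l := rfl
  rw [mul_div_mul_left _ _ two_ne_zero, h2]
  congr 3
  rw [mul_left_comm, mul_div_mul_left _ _ two_ne_zero]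

lemma gmat_eq {n : ℕ} {A : Matrix (Fin n) (Fin n) ℝ} (hA : A.PosDef)
    (b g : Fin n → ℝ) {y : Fin n → ℝ} (hy : y ≠ 0) (i j : Fin n) :
    fundT (Ff A b g) y i j = F1 A b g y i * F1 A b g y j + Ff A b g y * F2 A b y j i := by
  have h1 : (fun z => pd (fun w => Ff A b g w ^ 2) z j) =ᶠ[nhds y]
      fun z => 2 * (Ff A b g z * F1 A b g z j) := by
    filter_upwards [isOpen_ne.mem_nhds hy] with z hz
    rw [← pd_Ff hA b g hz j]
    unfold pd
    rw [fderiv_fun_pow 2 (differentiableAt_Ff hA b g hz)]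
    simp; ring
  unfold fundT pd2
  rw [← pd_Ff hA b g hy i, ← pd_F1 hA b g hy j i]
  unfold pd at h1 ⊢
  rw [h1.fderiv_eq, fderiv_const_mul ((differentiableAt_Ff hA b g hy).fun_mul (differentiableAt_F1 hA b g hy j)),
    fderiv_fun_mul (differentiableAt_Ff hA b g hy) (differentiableAt_F1 hA b g hy j)]
  simp; ring

lemma F2_symm {n : ℕ} {A : Matrix (Fin n) (Fin n) ℝ} (hA : A.PosDef)
    (b y : Fin n → ℝ) (i j : Fin n) : F2 A b y i j = F2 A b y j i := by
  unfold F2; rw [posDef_symm hA i j]; ring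

/-- contraction of `F2` with a vector -/
lemma F2_contr {n : ℕ} (A : Matrix (Fin n) (Fin n) ℝ) (b y v : Fin n → ℝ) (l : Fin n) :
    ∑ k, F2 A b y l k * v k = Real.exp (oneForm b y / alph A y) *
    ((oneForm b v - oneForm b y / alph A y * (oneForm (low A y) v / alph A y)) / alph A y *
      (b l - oneForm b y / alph A y * (low A y l / alph A y))
     + (1 - oneForm b y / alph A y) * (low A v l / alph A y
        - low A y l * oneForm (low A y) v / alph A y ^ 3)) := by
  have h1 : low A v l = ∑ k, A l k * v k := rfl
  have h2 : oneForm b v = ∑ k, b k * v k := rfl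
  have h3 : oneForm (low A y) v = ∑ k, low A y k * v k := rfl
  rw [h1, h2, h3]
  simp only [Finset.mul_sum, Finset.sum_div, Finset.sum_mul, ← Finset.sum_sub_distrib,
    ← Finset.sum_add_distrib, F2]
  exact Finset.sum_congr rfl fun i _ => by ring

lemma F2_contr_self {n : ℕ} {A : Matrix (Fin n) (Fin n) ℝ} (hA : A.PosDef)
    (b : Fin n → ℝ) {y : Fin n → ℝ} (hy : y ≠ 0) (l : Fin n) :
    ∑ k, F2 A b y l k * y k = 0 := by
  have h := (alph_pos hA hy).ne'
  rw [F2_contr, ← nsq_eq, ← alph_sq hA hy]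
  field_simp; ring

lemma F1_contr {n : ℕ} {A : Matrix (Fin n) (Fin n) ℝ} (hA : A.PosDef)
    (b g : Fin n → ℝ) {y : Fin n → ℝ} (hy : y ≠ 0) :
    ∑ k, F1 A b g y k * y k = Ff A b g y := by
  have h := (alph_pos hA hy).ne'
  have : ∑ k, F1 A b g y k * y k = Real.exp (oneForm b y / alph A y) *
      ((1 - oneForm b y / alph A y) *
        (oneForm (low A y) y / alph A y) + oneForm b y) + oneForm g y := by
    simp only [F1, oneForm, Finset.mul_sum, Finset.sum_div,
      ← Finset.sum_add_distrib]
    exact Finset.sum_congr rfl fun i _ => by ring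
  rw [this, ← nsq_eq, ← alph_sq hA hy, Ff]
  field_simp; ring

lemma gmat_contr {n : ℕ} {A : Matrix (Fin n) (Fin n) ℝ} (hA : A.PosDef)
    (b g : Fin n → ℝ) {y : Fin n → ℝ} (hy : y ≠ 0) (l : Fin n) :
    ∑ k, fundT (Ff A b g) y l k * y k = Ff A b g y * F1 A b g y l := by
  calc _ = F1 A b g y l * (∑ k, F1 A b g y k * y k) +
      Ff A b g y * ∑ k, F2 A b y l k * y k := by
        rw [Finset.mul_sum, Finset.mul_sum, ← Finset.sum_add_distrib]
        refine Finset.sum_congr rfl fun k _ => ?_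
        rw [gmat_eq hA b g hy, F2_symm hA b y k l]; ring
    _ = _ := by rw [F1_contr hA b g hy, F2_contr_self hA b hy]; ring

/-! ### Positivity and nondegeneracy -/

lemma nsq_zero {n : ℕ} (A : Matrix (Fin n) (Fin n) ℝ) : nsq A 0 = 0 := by simp [nsq]

lemma nsq_nonneg {n : ℕ} {A : Matrix (Fin n) (Fin n) ℝ} (hA : A.PosDef) (y : Fin n → ℝ) :
    0 ≤ nsq A y := by
  by_cases hy : y = 0
  · rw [hy, nsq_zero]
  · exact (nsq_pos hA hy).le

lemma nsq_comb {n : ℕ} {A : Matrix (Fin n) (Fin n) ℝ} (hA : A.PosDef) (u y : Fin n → ℝ) :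
    nsq A (nsq A y • u + (-oneForm (low A u) y) • y) =
      nsq A y * (nsq A u * nsq A y - oneForm (low A u) y ^ 2) := by
  have h : low A (nsq A y • u) = fun i => nsq A y * low A u i :=
    funext fun l => low_smul A u _ l
  rw [nsq_add (posDef_symm hA), nsq_smul, nsq_smul, h, oneForm_smul_left, oneForm_smul]
  ring

lemma cs_sq {n : ℕ} {A : Matrix (Fin n) (Fin n) ℝ} (hA : A.PosDef) (u : Fin n → ℝ)
    {y : Fin n → ℝ} (hy : y ≠ 0) : oneForm (low A u) y ^ 2 ≤ nsq A u * nsq A y := by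
  have h := nsq_nonneg hA (nsq A y • u + (-oneForm (low A u) y) • y)
  rw [nsq_comb hA] at h
  have := nonneg_of_mul_nonneg_right h (nsq_pos hA hy)
  linarith

/-- raised covector -/
def raise {n : ℕ} (A : Matrix (Fin n) (Fin n) ℝ) (b : Fin n → ℝ) : Fin n → ℝ :=
  fun i => ∑ j, A⁻¹ i j * b j

lemma low_raise {n : ℕ} {A : Matrix (Fin n) (Fin n) ℝ} (hA : A.PosDef) (b : Fin n → ℝ) :
    low A (raise A b) = b := by
  have h1 : low A (raise A b) = A.mulVec (A⁻¹.mulVec b) := rfl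
  rw [h1, Matrix.mulVec_mulVec, Matrix.mul_nonsing_inv _ hA.det_pos.ne'.isUnit, Matrix.one_mulVec]

lemma quadInv_eq {n : ℕ} {A : Matrix (Fin n) (Fin n) ℝ} (hA : A.PosDef) (b : Fin n → ℝ) :
    quadInv A b b = nsq A (raise A b) := by
  rw [nsq_eq, low_raise hA]
  simp only [quadInv, oneForm, raise, Finset.mul_sum]
  exact Finset.sum_congr rfl fun i _ => Finset.sum_congr rfl fun j _ => by ring

lemma abs_oneForm_lt {n : ℕ} {A : Matrix (Fin n) (Fin n) ℝ} (hA : A.PosDef) (b : Fin n → ℝ)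
    {c : ℝ} (hc : Real.sqrt (quadInv A b b) < c) {y : Fin n → ℝ} (hy : y ≠ 0) :
    |oneForm b y| < c * alph A y := by
  have h := cs_sq hA (raise A b) hy
  rw [low_raise hA, ← quadInv_eq hA] at h
  have h2 := Real.abs_le_sqrt h
  rw [Real.sqrt_mul' _ (nsq_nonneg hA y)] at h2
  exact lt_of_le_of_lt h2 (mul_lt_mul_of_pos_right hc (alph_pos hA hy))

lemma s_bound {n : ℕ} {A : Matrix (Fin n) (Fin n) ℝ} (hA : A.PosDef) (b : Fin n → ℝ)
    (hb : Real.sqrt (quadInv A b b) < 1) {y : Fin n → ℝ} (hy : y ≠ 0) :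
    -1 < oneForm b y / alph A y ∧ oneForm b y / alph A y < 1 := by
  have h := abs_lt.1 (abs_oneForm_lt hA b hb hy)
  have hp := alph_pos hA hy
  constructor
  · rw [lt_div_iff₀ hp]; linarith
  · rw [div_lt_iff₀ hp]; linarith

lemma Ff_pos {n : ℕ} {A : Matrix (Fin n) (Fin n) ℝ} (hA : A.PosDef) (b g : Fin n → ℝ)
    (hb : Real.sqrt (quadInv A b b) < 1) (hg : Real.sqrt (quadInv A g g) < Real.exp (-1))
    {y : Fin n → ℝ} (hy : y ≠ 0) : 0 < Ff A b g y := by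
  have h := abs_lt.1 (abs_oneForm_lt hA g hg hy)
  have hp := alph_pos hA hy
  have h2 := Real.exp_lt_exp.2 (s_bound hA b hb hy).1
  have h3 := mul_lt_mul_of_pos_left h2 hp
  unfold Ff
  linarith [h.1]

lemma gmat_det {n : ℕ} {A : Matrix (Fin n) (Fin n) ℝ} (hA : A.PosDef) (b g : Fin n → ℝ)
    (hb : Real.sqrt (quadInv A b b) < 1) (hg : Real.sqrt (quadInv A g g) < Real.exp (-1))
    {y : Fin n → ℝ} (hy : y ≠ 0) :
    (Matrix.of fun i j => fundT (Ff A b g) y i j).det ≠ 0 := by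
  intro h0
  obtain ⟨v, hv, hv0⟩ := Matrix.exists_mulVec_eq_zero_iff.2 h0
  have hp := alph_pos hA hy
  have hF := Ff_pos hA b g hb hg hy
  have hs := (s_bound hA b hb hy).2
  have hN := nsq_pos hA hy
  -- quadratic form
  have e1 : ∀ l, F1 A b g y l * oneForm (F1 A b g y) v +
      Ff A b g y * ∑ k, F2 A b y l k * v k = 0 := by
    intro l
    have := congrFun hv0 l
    simp only [Matrix.mulVec, dotProduct, Matrix.of_apply, Pi.zero_apply] at this
    rw [← this]
    simp only [oneForm, Finset.mul_sum, ← Finset.sum_add_distrib]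
    refine Finset.sum_congr rfl fun k _ => ?_
    rw [gmat_eq hA b g hy, F2_symm hA b y k l]; ring
  have e2 : oneForm (F1 A b g y) v ^ 2 + Ff A b g y * oneForm (fun l => ∑ k, F2 A b y l k * v k) v
      = 0 := by
    have : ∑ l, (F1 A b g y l * oneForm (F1 A b g y) v +
      Ff A b g y * ∑ k, F2 A b y l k * v k) * v l = 0 := by simp [e1]
    have hlin : ∀ c d (f h : Fin n → ℝ), ∑ l, (f l * c + d * h l) * v l
        = oneForm f v * c + d * oneForm h v := by
      intro c d f h
      simp only [oneForm, Finset.mul_sum, Finset.sum_mul, ← Finset.sum_add_distrib]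
      exact Finset.sum_congr rfl fun k _ => by ring
    rw [hlin _ _ (F1 A b g y) (fun l => ∑ k, F2 A b y l k * v k)] at this
    rw [sq]; exact this
  have e3 : oneForm (fun l => ∑ k, F2 A b y l k * v k) v =
      Real.exp (oneForm b y / alph A y) *
      ((oneForm b v - oneForm b y / alph A y * (oneForm (low A y) v / alph A y)) ^ 2 / alph A y
     + (1 - oneForm b y / alph A y) * ((nsq A v * nsq A y - oneForm (low A v) y ^ 2)
        / alph A y ^ 3)) := by
    rw [← alph_sq hA hy, nsq_eq, low_comm (posDef_symm hA) v y]
    have : ∀ c d p q r m : ℝ, oneForm (fun l => c * (d * (b l - p * (low A y l / q))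
        + r * (low A v l / q - low A y l * m / q ^ 3))) v
        = c * (d * (oneForm b v - p * (oneForm (low A y) v / q))
        + r * (oneForm (low A v) v / q - oneForm (low A y) v * m / q ^ 3)) := by
      intro c d p q r m
      simp only [oneForm, Finset.mul_sum, Finset.sum_div, Finset.sum_mul, ← Finset.sum_sub_distrib,
        ← Finset.sum_add_distrib]
      exact Finset.sum_congr rfl fun i _ => by ring
    simp only [F2_contr]
    rw [this]
    field_simp
  have e4 : 0 ≤ nsq A v * nsq A y - oneForm (low A v) y ^ 2 := by
    have := cs_sq hA v hy; linarith
  have e5 : 0 ≤ (oneForm b v - oneForm b y / alph A y * (oneForm (low A y) v / alph A y)) ^ 2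
      / alph A y := by positivity
  have e6 : 0 ≤ (1 - oneForm b y / alph A y) * ((nsq A v * nsq A y - oneForm (low A v) y ^ 2)
        / alph A y ^ 3) := mul_nonneg (by linarith) (by positivity)
  have e7 : 0 ≤ oneForm (fun l => ∑ k, F2 A b y l k * v k) v := by
    rw [e3]; exact mul_nonneg (Real.exp_pos _).le (by linarith)
  have e8 : oneForm (fun l => ∑ k, F2 A b y l k * v k) v = 0 := by
    have h1 := mul_nonneg hF.le e7
    have h2 : Ff A b g y * oneForm (fun l => ∑ k, F2 A b y l k * v k) v = 0 := by
      nlinarith [sq_nonneg (oneForm (F1 A b g y) v)]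
    exact (mul_eq_zero.1 h2).resolve_left hF.ne'
  have e9 : oneForm (F1 A b g y) v = 0 := by
    rw [e8] at e2; simpa using e2
  have e10 : nsq A v * nsq A y - oneForm (low A v) y ^ 2 = 0 := by
    rw [e8] at e3
    have h1 := (mul_eq_zero.1 e3.symm).resolve_left (Real.exp_pos _).ne'
    have h2 : (1 - oneForm b y / alph A y) * ((nsq A v * nsq A y - oneForm (low A v) y ^ 2)
        / alph A y ^ 3) = 0 := by linarith
    have h3 := (mul_eq_zero.1 h2).resolve_left (by linarith)
    exact (div_eq_zero_iff.1 h3).resolve_right (by positivity)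
  have e11 := nsq_comb hA v y
  rw [e10, mul_zero] at e11
  have e12 : nsq A y • v + (-oneForm (low A v) y) • y = 0 := by
    by_contra hne
    exact (nsq_pos hA hne).ne' e11
  have e13 := congrArg (oneForm (F1 A b g y)) e12
  have e14 : oneForm (F1 A b g y) y = Ff A b g y := F1_contr hA b g hy
  rw [oneForm_add, oneForm_smul, oneForm_smul, e9, e14] at e13
  have e15 : oneForm (F1 A b g y) 0 = 0 := by simp [oneForm]
  rw [e15] at e13
  have e16 : oneForm (low A v) y = 0 := by
    have : oneForm (low A v) y * Ff A b g y = 0 := by linarith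
    exact (mul_eq_zero.1 this).resolve_right hF.ne'
  rw [e16] at e10
  have e17 : nsq A v = 0 := by
    have : nsq A v * nsq A y = 0 := by linarith
    exact (mul_eq_zero.1 this).resolve_right hN.ne'
  exact (nsq_pos hA hv).ne' e17

/-! ### The spray -/

lemma sum_pd {n : ℕ} (f : (Fin n → ℝ) → ℝ) (x y : Fin n → ℝ) :
    ∑ k, pd f x k * y k = fderiv ℝ f x y := by
  have h : y = ∑ k, y k • (Pi.single k (1:ℝ) : Fin n → ℝ) := by
    ext i; simp [Finset.sum_apply, Pi.single_apply]
  conv_rhs => rw [h]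
  rw [map_sum]
  refine Finset.sum_congr rfl fun k _ => ?_
  rw [map_smul, smul_eq_mul, mul_comm]; rfl

lemma pd_sum_mul {n : ℕ} {f : Fin n → (Fin n → ℝ) → ℝ} {x : Fin n → ℝ}
    (hf : ∀ j, DifferentiableAt ℝ (f j) x) (y : Fin n → ℝ) (k : Fin n) :
    pd (fun z => ∑ j, f j z * y j) x k = ∑ j, pd (f j) x k * y j := by
  unfold pd
  rw [fderiv_fun_sum fun j _ => (hf j).mul_const (y j)]
  simp only [_root_.sum_apply]
  refine Finset.sum_congr rfl fun j _ => ?_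
  rw [fderiv_mul_const (hf j)]
  simp [mul_comm]

section field
variable {n : ℕ} {a : (Fin n → ℝ) → Matrix (Fin n) (Fin n) ℝ} {b g : (Fin n → ℝ) → Fin n → ℝ}
  {x y : Fin n → ℝ}

lemma diffx_oneForm (hb : ∀ i, DifferentiableAt ℝ (fun z => b z i) x) :
    DifferentiableAt ℝ (fun z => oneForm (b z) y) x := by
  unfold oneForm; fun_prop

lemma diffx_low (ha : ∀ i j, DifferentiableAt ℝ (fun z => a z i j) x) (l : Fin n) :
    DifferentiableAt ℝ (fun z => low (a z) y l) x := by
  unfold low; fun_prop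

lemma diffx_nsq (ha : ∀ i j, DifferentiableAt ℝ (fun z => a z i j) x) :
    DifferentiableAt ℝ (fun z => nsq (a z) y) x := by
  unfold nsq; fun_prop

lemma diffx_alph (ha : ∀ i j, DifferentiableAt ℝ (fun z => a z i j) x)
    (hA : (a x).PosDef) (hy : y ≠ 0) :
    DifferentiableAt ℝ (fun z => alph (a z) y) x :=
  (diffx_nsq ha).sqrt (nsq_pos hA hy).ne'

lemma diffx_Ff (ha : ∀ i j, DifferentiableAt ℝ (fun z => a z i j) x)
    (hb : ∀ i, DifferentiableAt ℝ (fun z => b z i) x)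
    (hg : ∀ i, DifferentiableAt ℝ (fun z => g z i) x) (hA : (a x).PosDef) (hy : y ≠ 0) :
    DifferentiableAt ℝ (fun z => Ff (a z) (b z) (g z) y) x := by
  have h1 := diffx_alph ha hA hy
  have h2 := diffx_oneForm (y := y) hb
  have h3 := diffx_oneForm (y := y) hg
  have h4 := (alph_pos hA hy).ne'
  unfold Ff
  fun_prop (disch := assumption)

lemma diffx_F1 (ha : ∀ i j, DifferentiableAt ℝ (fun z => a z i j) x)
    (hb : ∀ i, DifferentiableAt ℝ (fun z => b z i) x)
    (hg : ∀ i, DifferentiableAt ℝ (fun z => g z i) x) (hA : (a x).PosDef) (hy : y ≠ 0)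
    (l : Fin n) :
    DifferentiableAt ℝ (fun z => F1 (a z) (b z) (g z) y l) x := by
  have h1 := diffx_alph ha hA hy
  have h2 := diffx_oneForm (y := y) hb
  have h3 := diffx_low (y := y) ha l
  have h4 := (alph_pos hA hy).ne'
  have h5 := hb l
  have h6 := hg l
  unfold F1
  fun_prop (disch := assumption)

lemma diffx_F2 (ha : ∀ i j, DifferentiableAt ℝ (fun z => a z i j) x)
    (hb : ∀ i, DifferentiableAt ℝ (fun z => b z i) x)
    (hA : (a x).PosDef) (hy : y ≠ 0)
    (l k : Fin n) :
    DifferentiableAt ℝ (fun z => F2 (a z) (b z) y l k) x := by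
  have h1 := diffx_alph ha hA hy
  have h2 := diffx_oneForm (y := y) hb
  have h3 := diffx_low (y := y) ha l
  have h3' := diffx_low (y := y) ha k
  have h4 := (alph_pos hA hy).ne'
  have h4' := pow_ne_zero 3 h4
  have h5 := hb l
  have h6 := hb k
  have h7 := ha l k
  unfold F2
  fun_prop (disch := assumption)

/-- The Euler-Lagrange form of the spray equation. -/
lemma spray_eq (ha : ∀ i j, DifferentiableAt ℝ (fun z => a z i j) x)
    (hb : ∀ i, DifferentiableAt ℝ (fun z => b z i) x)
    (hg : ∀ i, DifferentiableAt ℝ (fun z => g z i) x)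
    (hP : ∀ᶠ z in nhds x, (a z).PosDef) (hy : y ≠ 0)
    (hb1 : Real.sqrt (quadInv (a x) (b x) (b x)) < 1)
    (hg1 : Real.sqrt (quadInv (a x) (g x) (g x)) < Real.exp (-1)) (l : Fin n) :
    ∑ k, F2 (a x) (b x) y l k * (2 * sprayF (fun z w => Ff (a z) (b z) (g z) w) x y k)
      = fderiv ℝ (fun z => F1 (a z) (b z) (g z) y l) x y
        - pd (fun z => Ff (a z) (b z) (g z) y) x l := by
  have hA : (a x).PosDef := hP.self_of_nhds
  set F : (Fin n → ℝ) → (Fin n → ℝ) → ℝ := fun z w => Ff (a z) (b z) (g z) w with hFdef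
  set M := gmatF F x y with hM
  have hF := Ff_pos hA (b x) (g x) hb1 hg1 hy
  have dF := diffx_Ff ha hb hg hA hy
  have dF1 := diffx_F1 ha hb hg hA hy
  have hdet : M.det ≠ 0 := gmat_det hA (b x) (g x) hb1 hg1 hy
  have hgm : ∀ i j, (fun z => gmatF F z y i j) =ᶠ[nhds x] fun z =>
      F1 (a z) (b z) (g z) y i * F1 (a z) (b z) (g z) y j
        + Ff (a z) (b z) (g z) y * F2 (a z) (b z) y j i := by
    intro i j
    filter_upwards [hP] with z hz
    exact gmat_eq hz (b z) (g z) hy i j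
  have hsym : ∀ i j, (fun z => gmatF F z y i j) =ᶠ[nhds x] fun z => gmatF F z y j i := by
    intro i j
    filter_upwards [hP, hgm i j, hgm j i] with z hz h1 h2
    rw [h1, h2, F2_symm hz]; ring
  have hd : ∀ i j, DifferentiableAt ℝ (fun z => gmatF F z y i j) x := by
    intro i j
    refine DifferentiableAt.congr_of_eventuallyEq ?_ (hgm i j)
    exact ((dF1 i).fun_mul (dF1 j)).fun_add (dF.fun_mul (diffx_F2 ha hb hA hy j i))
  have hpsym : ∀ i j k, pd (fun z => gmatF F z y i j) x k = pd (fun z => gmatF F z y j i) x k := by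
    intro i j k; unfold pd; rw [(hsym i j).fderiv_eq]
  have hc1 : ∀ l k, ∑ j, pd (fun z => gmatF F z y l j) x k * y j
      = pd (fun z => Ff (a z) (b z) (g z) y * F1 (a z) (b z) (g z) y l) x k := by
    intro l k
    rw [← pd_sum_mul (fun j => hd l j) y k]
    unfold pd
    congr 1
    refine Filter.EventuallyEq.fderiv_eq ?_
    filter_upwards [hP] with z hz
    exact gmat_contr hz (b z) (g z) hy l
  have hc2 : ∀ k, ∑ l, pd (fun z => Ff (a z) (b z) (g z) y * F1 (a z) (b z) (g z) y l) x k * y l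
      = pd (fun z => Ff (a z) (b z) (g z) y * Ff (a z) (b z) (g z) y) x k := by
    intro k
    rw [← pd_sum_mul (fun j => dF.fun_mul (dF1 j)) y k]
    unfold pd
    congr 1
    refine Filter.EventuallyEq.fderiv_eq ?_
    filter_upwards [hP] with z hz
    rw [← F1_contr hz (b z) (g z) hy, Finset.mul_sum]
    refine Finset.sum_congr rfl fun j _ => ?_
    rw [F1_contr hz (b z) (g z) hy]; ring
  have hprod : ∀ l v, fderiv ℝ (fun z => Ff (a z) (b z) (g z) y * F1 (a z) (b z) (g z) y l) x v
      = Ff (a x) (b x) (g x) y * fderiv ℝ (fun z => F1 (a z) (b z) (g z) y l) x v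
        + F1 (a x) (b x) (g x) y l * fderiv ℝ (fun z => Ff (a z) (b z) (g z) y) x v := by
    intro l v
    rw [fderiv_fun_mul dF (dF1 l)]; simp
  have hprod2 : ∀ v, fderiv ℝ (fun z => Ff (a z) (b z) (g z) y * Ff (a z) (b z) (g z) y) x v
      = 2 * (Ff (a x) (b x) (g x) y * fderiv ℝ (fun z => Ff (a z) (b z) (g z) y) x v) := by
    intro v
    rw [fderiv_fun_mul dF dF]; simp; ring
  set T : Fin n → ℝ := fun l => ∑ j, ∑ k, (pd (fun z => gmatF F z y j l) x k
        + pd (fun z => gmatF F z y l k) x j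
        - pd (fun z => gmatF F z y j k) x l) * y j * y k with hT
  have hTe : ∀ l, T l = 2 * fderiv ℝ (fun z => Ff (a z) (b z) (g z) y * F1 (a z) (b z) (g z) y l) x y
      - pd (fun z => Ff (a z) (b z) (g z) y * Ff (a z) (b z) (g z) y) x l := by
    intro l
    have t1 : ∑ j, ∑ k, pd (fun z => gmatF F z y l k) x j * y k * y j
        = fderiv ℝ (fun z => Ff (a z) (b z) (g z) y * F1 (a z) (b z) (g z) y l) x y := by
      rw [← sum_pd]
      refine Finset.sum_congr rfl fun j _ => ?_
      rw [← Finset.sum_mul, hc1]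
    have t2 : ∑ j, ∑ k, pd (fun z => gmatF F z y j l) x k * y j * y k
        = fderiv ℝ (fun z => Ff (a z) (b z) (g z) y * F1 (a z) (b z) (g z) y l) x y := by
      rw [← t1, Finset.sum_comm]
      refine Finset.sum_congr rfl fun j _ => Finset.sum_congr rfl fun k _ => ?_
      rw [hpsym]
    have t3 : ∑ j, ∑ k, pd (fun z => gmatF F z y j k) x l * y k * y j
        = pd (fun z => Ff (a z) (b z) (g z) y * Ff (a z) (b z) (g z) y) x l := by
      rw [← hc2]
      refine Finset.sum_congr rfl fun j _ => ?_
      rw [← Finset.sum_mul, hc1]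
    rw [two_mul, ← t3]
    nth_rewrite 1 [← t2]
    rw [← t1, hT]
    simp only [← Finset.sum_sub_distrib, ← Finset.sum_add_distrib]
    exact Finset.sum_congr rfl fun j _ => Finset.sum_congr rfl fun k _ => by ring
  set G : Fin n → ℝ := fun k => sprayF F x y k with hG
  have hGv : G = (1 / 4 : ℝ) • (M⁻¹.mulVec T) := by
    ext i; rfl
  have hMG : M.mulVec G = (1 / 4 : ℝ) • T := by
    rw [hGv, Matrix.mulVec_smul, Matrix.mulVec_mulVec, Matrix.mul_nonsing_inv _ hdet.isUnit,
      Matrix.one_mulVec]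
  have hMe : ∀ l, F1 (a x) (b x) (g x) y l * oneForm (F1 (a x) (b x) (g x) y) G
      + Ff (a x) (b x) (g x) y * ∑ k, F2 (a x) (b x) y l k * G k = 1 / 4 * T l := by
    intro l
    have h := congrFun hMG l
    simp only [Matrix.mulVec, dotProduct, Pi.smul_apply, smul_eq_mul] at h
    rw [← h]
    simp only [oneForm, Finset.mul_sum, ← Finset.sum_add_distrib]
    refine Finset.sum_congr rfl fun k _ => ?_
    have h2 : M l k = _ := gmat_eq hA (b x) (g x) hy l k
    rw [h2, F2_symm hA (b x) y k l]; ring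
  -- contraction with y
  have hy1 : ∑ l, T l * y l = 2 * (Ff (a x) (b x) (g x) y *
      fderiv ℝ (fun z => Ff (a z) (b z) (g z) y) x y) := by
    have h1 : ∑ l, fderiv ℝ (fun z => Ff (a z) (b z) (g z) y * F1 (a z) (b z) (g z) y l) x y * y l
        = fderiv ℝ (fun z => Ff (a z) (b z) (g z) y * Ff (a z) (b z) (g z) y) x y := by
      simp only [← sum_pd, Finset.sum_mul]
      rw [Finset.sum_comm]
      refine Finset.sum_congr rfl fun k _ => ?_
      rw [← hc2, Finset.sum_mul]
      exact Finset.sum_congr rfl fun j _ => by ring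
    have h2 := sum_pd (fun z => Ff (a z) (b z) (g z) y * Ff (a z) (b z) (g z) y) x y
    have h3 : ∑ l, T l * y l = 2 * (∑ l, fderiv ℝ (fun z => Ff (a z) (b z) (g z) y *
        F1 (a z) (b z) (g z) y l) x y * y l) -
        ∑ l, pd (fun z => Ff (a z) (b z) (g z) y * Ff (a z) (b z) (g z) y) x l * y l := by
      rw [Finset.mul_sum, ← Finset.sum_sub_distrib]
      exact Finset.sum_congr rfl fun j _ => by rw [hTe]; ring
    rw [h3, h1, h2, hprod2]; ring
  have hy2 : ∑ l, T l * y l = 4 * (Ff (a x) (b x) (g x) y *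
      oneForm (F1 (a x) (b x) (g x) y) G) := by
    have h1 : ∑ l, T l * y l = ∑ l, (4 * oneForm (F1 (a x) (b x) (g x) y) G *
        (F1 (a x) (b x) (g x) y l * y l) + 4 * Ff (a x) (b x) (g x) y *
        ∑ k, F2 (a x) (b x) y l k * G k * y l) := by
      refine Finset.sum_congr rfl fun l _ => ?_
      rw [← Finset.sum_mul]
      linear_combination (-4 * y l) * hMe l
    have h2 : ∑ l, ∑ k, F2 (a x) (b x) y l k * G k * y l = 0 := by
      rw [Finset.sum_comm]
      refine Finset.sum_eq_zero fun k _ => ?_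
      have h3 := F2_contr_self hA (b x) hy k
      have h4 : ∑ l, F2 (a x) (b x) y l k * G k * y l = G k * ∑ l, F2 (a x) (b x) y k l * y l := by
        rw [Finset.mul_sum]
        refine Finset.sum_congr rfl fun l _ => ?_
        rw [F2_symm hA (b x) y l k]; ring
      rw [h4, h3, mul_zero]
    rw [h1, Finset.sum_add_distrib, ← Finset.mul_sum, ← Finset.mul_sum, h2,
      F1_contr hA (b x) (g x) hy]
    ring
  have hy3 : 2 * oneForm (F1 (a x) (b x) (g x) y) G =
      fderiv ℝ (fun z => Ff (a z) (b z) (g z) y) x y := by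
    have h : Ff (a x) (b x) (g x) y * (2 * oneForm (F1 (a x) (b x) (g x) y) G) =
      Ff (a x) (b x) (g x) y * fderiv ℝ (fun z => Ff (a z) (b z) (g z) y) x y := by linarith
    exact mul_left_cancel₀ hF.ne' h
  have hfin : ∑ k, F2 (a x) (b x) y l k * (2 * G k) = 2 * ∑ k, F2 (a x) (b x) y l k * G k := by
    rw [Finset.mul_sum]; exact Finset.sum_congr rfl fun k _ => by ring
  change ∑ k, F2 (a x) (b x) y l k * (2 * G k) = _
  rw [hfin]
  have h5 := hMe l
  have h6 : pd (fun z => Ff (a z) (b z) (g z) y * Ff (a z) (b z) (g z) y) x l =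
    2 * (Ff (a x) (b x) (g x) y * pd (fun z => Ff (a z) (b z) (g z) y) x l) := hprod2 _
  rw [hTe, hprod, h6] at h5
  refine mul_left_cancel₀ hF.ne' ?_
  linear_combination 2 * h5 - F1 (a x) (b x) (g x) y l * hy3

end field

section field2
variable {n : ℕ} {a : (Fin n → ℝ) → Matrix (Fin n) (Fin n) ℝ} {b g v : (Fin n → ℝ) → Fin n → ℝ}
  {x y : Fin n → ℝ}

lemma fderivx_Ff (ha : ∀ i j, DifferentiableAt ℝ (fun z => a z i j) x)
    (hb : ∀ i, DifferentiableAt ℝ (fun z => b z i) x)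
    (hg : ∀ i, DifferentiableAt ℝ (fun z => g z i) x) (hA : (a x).PosDef) (hy : y ≠ 0)
    (d : Fin n → ℝ) :
    fderiv ℝ (fun z => Ff (a z) (b z) (g z) y) x d =
      Real.exp (oneForm (b x) y / alph (a x) y) * ((1 - oneForm (b x) y / alph (a x) y) *
        (fderiv ℝ (fun z => nsq (a z) y) x d / (2 * alph (a x) y))
          + fderiv ℝ (fun z => oneForm (b z) y) x d) + fderiv ℝ (fun z => oneForm (g z) y) x d := by
  refine fderiv_eq_of_line (diffx_Ff ha hb hg hA hy) ?_
  have h := hasDerivAt_core1 (line_of_fderiv d (diffx_nsq (y := y) ha))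
    (line_of_fderiv d (diffx_oneForm (y := y) hb)) (line_of_fderiv d (diffx_oneForm (y := y) hg))
    (by simpa using nsq_pos hA hy)
  refine h.congr_deriv ?_
  simp only [zero_smul, add_zero, alph_eq]

lemma fderivx_F1 (ha : ∀ i j, DifferentiableAt ℝ (fun z => a z i j) x)
    (hb : ∀ i, DifferentiableAt ℝ (fun z => b z i) x)
    (hg : ∀ i, DifferentiableAt ℝ (fun z => g z i) x) (hA : (a x).PosDef) (hy : y ≠ 0)
    (d : Fin n → ℝ) (l : Fin n) :
    fderiv ℝ (fun z => F1 (a z) (b z) (g z) y l) x d =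
      Real.exp (oneForm (b x) y / alph (a x) y) *
        ((fderiv ℝ (fun z => oneForm (b z) y) x d - oneForm (b x) y / alph (a x) y *
          (fderiv ℝ (fun z => nsq (a z) y) x d / (2 * alph (a x) y))) / alph (a x) y *
          (b x l - oneForm (b x) y / alph (a x) y * (low (a x) y l / alph (a x) y))
        + (1 - oneForm (b x) y / alph (a x) y) *
          (fderiv ℝ (fun z => low (a z) y l) x d / alph (a x) y
            - low (a x) y l * fderiv ℝ (fun z => nsq (a z) y) x d / (2 * alph (a x) y ^ 3))
        + fderiv ℝ (fun z => b z l) x d) + fderiv ℝ (fun z => g z l) x d := by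
  refine fderiv_eq_of_line (diffx_F1 ha hb hg hA hy l) ?_
  have h := hasDerivAt_core2 (line_of_fderiv d (diffx_nsq (y := y) ha))
    (line_of_fderiv d (diffx_oneForm (y := y) hb))
    (line_of_fderiv d (diffx_low (y := y) ha l))
    (line_of_fderiv d (hb l)) (line_of_fderiv d (hg l))
    (by simpa using nsq_pos hA hy)
  refine h.congr_deriv ?_
  simp only [zero_smul, add_zero, alph_eq]

lemma pd_low (ha : ∀ i j, DifferentiableAt ℝ (fun z => a z i j) x) (l k : Fin n) :
    pd (fun z => low (a z) y l) x k = ∑ m, pd (fun z => a z l m) x k * y m :=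
  pd_sum_mul (fun j => ha l j) y k

lemma pd_oneForm (hb : ∀ i, DifferentiableAt ℝ (fun z => b z i) x) (k : Fin n) :
    pd (fun z => oneForm (b z) y) x k = ∑ m, pd (fun z => b z m) x k * y m :=
  pd_sum_mul (fun j => hb j) y k

lemma pd_nsq (ha : ∀ i j, DifferentiableAt ℝ (fun z => a z i j) x) (k : Fin n) :
    pd (fun z => nsq (a z) y) x k = ∑ l, pd (fun z => low (a z) y l) x k * y l := by
  rw [← pd_sum_mul (fun j => diffx_low (y := y) ha j) y k]
  simp only [nsq_eq, oneForm]

lemma pd_a_symm (hP : ∀ᶠ z in nhds x, (a z).PosDef) (i j k : Fin n) :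
    pd (fun z => a z i j) x k = pd (fun z => a z j i) x k := by
  unfold pd
  congr 1
  refine Filter.EventuallyEq.fderiv_eq ?_
  filter_upwards [hP] with z hz
  exact posDef_symm hz i j

lemma chr_symm (hP : ∀ᶠ z in nhds x, (a z).PosDef) (k i j : Fin n) :
    chr a x k i j = chr a x k j i := by
  unfold chr
  congr 1
  refine Finset.sum_congr rfl fun l _ => ?_
  rw [pd_a_symm hP i j l]; ring

/-- `2 ᵅG` -/
def cvec (a : (Fin n → ℝ) → Matrix (Fin n) (Fin n) ℝ) (x y : Fin n → ℝ) : Fin n → ℝ :=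
  fun k => 2 * alphaG a x y k

lemma cvec_eq (k : Fin n) : cvec a x y k = ∑ i, ∑ j, chr a x k i j * y i * y j := by
  unfold cvec alphaG; ring

lemma low_cvec (ha : ∀ i j, DifferentiableAt ℝ (fun z => a z i j) x)
    (hP : ∀ᶠ z in nhds x, (a z).PosDef) (l : Fin n) :
    low (a x) (cvec a x y) l = fderiv ℝ (fun z => low (a z) y l) x y
      - 1 / 2 * pd (fun z => nsq (a z) y) x l := by
  have hA : (a x).PosDef := hP.self_of_nhds
  set C : Fin n → ℝ := fun l => ∑ i, ∑ j, (1 / 2) *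
    (pd (fun z => a z j l) x i + pd (fun z => a z i l) x j - pd (fun z => a z i j) x l) * y i * y j
    with hC
  have h1 : cvec a x y = raise (a x) C := by
    ext k
    rw [cvec_eq]
    simp only [raise, chr, hC, Finset.mul_sum, Finset.sum_mul]
    rw [Finset.sum_comm' (t' := Finset.univ) (s' := fun _ => Finset.univ) (by simp)]
    rw [Finset.sum_comm]
    conv_rhs => rw [Finset.sum_comm]
    refine Finset.sum_congr rfl fun i _ => ?_
    rw [Finset.sum_comm]
    refine Finset.sum_congr rfl fun j _ => Finset.sum_congr rfl fun m _ => ?_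
    ring
  have t1 : ∑ i, ∑ j, pd (fun z => a z j l) x i * y j * y i
      = fderiv ℝ (fun z => low (a z) y l) x y := by
    rw [← sum_pd]
    refine Finset.sum_congr rfl fun i _ => ?_
    rw [pd_low ha, Finset.sum_mul]
    refine Finset.sum_congr rfl fun j _ => ?_
    rw [pd_a_symm hP]
  have t2 : ∑ i, ∑ j, pd (fun z => a z i l) x j * y i * y j
      = fderiv ℝ (fun z => low (a z) y l) x y := by
    rw [← t1, Finset.sum_comm]
  have t3 : ∑ i, ∑ j, pd (fun z => a z i j) x l * y j * y i = pd (fun z => nsq (a z) y) x l := by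
    rw [pd_nsq ha]
    refine Finset.sum_congr rfl fun i _ => ?_
    rw [pd_low ha, Finset.sum_mul]
  rw [h1, low_raise hA, ← t3]
  have : fderiv ℝ (fun z => low (a z) y l) x y = 1 / 2 * (fderiv ℝ (fun z => low (a z) y l) x y
    + fderiv ℝ (fun z => low (a z) y l) x y) := by ring
  rw [this]
  nth_rewrite 1 [← t1]
  rw [← t2, hC]
  simp only [Finset.mul_sum, ← Finset.sum_sub_distrib, ← Finset.sum_add_distrib]
  exact Finset.sum_congr rfl fun j _ => Finset.sum_congr rfl fun k _ => by ring

lemma y_cvec (ha : ∀ i j, DifferentiableAt ℝ (fun z => a z i j) x)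
    (hP : ∀ᶠ z in nhds x, (a z).PosDef) :
    oneForm (low (a x) y) (cvec a x y) = 1 / 2 * fderiv ℝ (fun z => nsq (a z) y) x y := by
  have hA : (a x).PosDef := hP.self_of_nhds
  rw [low_comm (posDef_symm hA)]
  have h1 : oneForm (low (a x) (cvec a x y)) y = ∑ l, fderiv ℝ (fun z => low (a z) y l) x y * y l
      - 1 / 2 * ∑ l, pd (fun z => nsq (a z) y) x l * y l := by
    rw [Finset.mul_sum, ← Finset.sum_sub_distrib]
    unfold oneForm
    refine Finset.sum_congr rfl fun l _ => ?_
    rw [low_cvec ha hP]; ring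
  have h2 : ∑ l, fderiv ℝ (fun z => low (a z) y l) x y * y l =
      fderiv ℝ (fun z => nsq (a z) y) x y := by
    simp only [← sum_pd, Finset.sum_mul]
    rw [Finset.sum_comm]
    refine Finset.sum_congr rfl fun k _ => ?_
    rw [pd_nsq ha, Finset.sum_mul]
    exact Finset.sum_congr rfl fun j _ => by ring
  rw [h1, h2, sum_pd]; ring

lemma r00_eq (hv : ∀ i, DifferentiableAt ℝ (fun z => v z i) x) :
    r00 a v x y = fderiv ℝ (fun z => oneForm (v z) y) x y - oneForm (v x) (cvec a x y) := by
  have h1 : ∑ i, ∑ j, covD a v x i j * y i * y j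
      = fderiv ℝ (fun z => oneForm (v z) y) x y - oneForm (v x) (cvec a x y) := by
    have e1 : fderiv ℝ (fun z => oneForm (v z) y) x y = ∑ i, ∑ j, pd (fun z => v z i) x j * y i * y j := by
      rw [← sum_pd, Finset.sum_comm]
      refine Finset.sum_congr rfl fun k _ => ?_
      rw [pd_oneForm hv, Finset.sum_mul]
    have e2 : oneForm (v x) (cvec a x y) = ∑ i, ∑ j, (∑ k, v x k * chr a x k i j) * y i * y j := by
      simp only [oneForm, cvec_eq, Finset.mul_sum, Finset.sum_mul]
      rw [Finset.sum_comm]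
      refine Finset.sum_congr rfl fun i _ => ?_
      rw [Finset.sum_comm]
      exact Finset.sum_congr rfl fun j _ => Finset.sum_congr rfl fun k _ => by ring
    rw [e1, e2]
    simp only [← Finset.sum_sub_distrib, covD]
    exact Finset.sum_congr rfl fun j _ => Finset.sum_congr rfl fun k _ => by ring
  have h2 : ∑ i, ∑ j, covD a v x j i * y i * y j
      = fderiv ℝ (fun z => oneForm (v z) y) x y - oneForm (v x) (cvec a x y) := by
    rw [← h1, Finset.sum_comm]
    exact Finset.sum_congr rfl fun j _ => Finset.sum_congr rfl fun k _ => by ring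
  have h3 : r00 a v x y = 1 / 2 * (∑ i, ∑ j, covD a v x i j * y i * y j +
      ∑ i, ∑ j, covD a v x j i * y i * y j) := by
    simp only [r00, rSym, Finset.mul_sum, ← Finset.sum_add_distrib]
    exact Finset.sum_congr rfl fun j _ => Finset.sum_congr rfl fun k _ => by ring
  rw [h3, h1, h2]; ring

lemma s0low_eq (hv : ∀ i, DifferentiableAt ℝ (fun z => v z i) x)
    (hP : ∀ᶠ z in nhds x, (a z).PosDef) (l : Fin n) :
    2 * s0low a v x y l = fderiv ℝ (fun z => v z l) x y - pd (fun z => oneForm (v z) y) x l := by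
  rw [← sum_pd, pd_oneForm hv, ← Finset.sum_sub_distrib, s0low, Finset.mul_sum]
  refine Finset.sum_congr rfl fun k _ => ?_
  have : ∑ m, v x m * chr a x m l k = ∑ m, v x m * chr a x m k l :=
    Finset.sum_congr rfl fun m _ => by rw [chr_symm hP]
  rw [sSym, covD, covD, this]; ring

/-- The key equation. -/
lemma key_eq (ha : ∀ i j, DifferentiableAt ℝ (fun z => a z i j) x)
    (hb : ∀ i, DifferentiableAt ℝ (fun z => b z i) x)
    (hg : ∀ i, DifferentiableAt ℝ (fun z => g z i) x)
    (hP : ∀ᶠ z in nhds x, (a z).PosDef) (hy : y ≠ 0)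
    (hb1 : Real.sqrt (quadInv (a x) (b x) (b x)) < 1)
    (hg1 : Real.sqrt (quadInv (a x) (g x) (g x)) < Real.exp (-1))
    (W : Fin n → ℝ)
    (hW : ∀ m, W m = nsq (a x) y *
        (sprayF (fun z w => Ff (a z) (b z) (g z) w) x y m - alphaG a x y m)
      - oneForm (low (a x) y)
        (fun m => sprayF (fun z w => Ff (a z) (b z) (g z) w) x y m - alphaG a x y m) * y m)
    (l : Fin n) :
    2 * (1 - oneForm (b x) y / alph (a x) y) * low (a x) W l
      + 2 * (b x l - oneForm (b x) y / alph (a x) y * (low (a x) y l / alph (a x) y))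
        * oneForm (b x) W
    = alph (a x) y ^ 3 * (2 * s0low a b x y l
      + (b x l - oneForm (b x) y / alph (a x) y * (low (a x) y l / alph (a x) y))
        * r00 a b x y / alph (a x) y
      + 2 * Real.exp (-(oneForm (b x) y / alph (a x) y)) * s0low a g x y l) := by
  have hA : (a x).PosDef := hP.self_of_nhds
  have hp := alph_pos hA hy
  have hs := spray_eq ha hb hg hP hy hb1 hg1 l
  set D : Fin n → ℝ :=
    fun m => sprayF (fun z w => Ff (a z) (b z) (g z) w) x y m - alphaG a x y m with hD
  have hWv : W = nsq (a x) y • D + (-oneForm (low (a x) y) D) • y := by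
    ext m; rw [hW]; simp only [hD, Pi.add_apply, Pi.smul_apply, smul_eq_mul]; ring
  have hv : (fun k => 2 * sprayF (fun z w => Ff (a z) (b z) (g z) w) x y k)
      = (2:ℝ) • D + cvec a x y := by
    ext k; simp only [hD, cvec, Pi.add_apply, Pi.smul_apply, smul_eq_mul]; ring
  have hpd : pd (fun z => Ff (a z) (b z) (g z) y) x l = _ :=
    fderivx_Ff ha hb hg hA hy (Pi.single l 1)
  have h1 := F2_contr (a x) (b x) y
    (fun k => 2 * sprayF (fun z w => Ff (a z) (b z) (g z) w) x y k) l
  rw [hs, fderivx_F1 ha hb hg hA hy, hpd] at h1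
  have c1 := low_cvec (y := y) ha hP l
  have c2 := y_cvec (y := y) ha hP
  have c3 := r00_eq (a := a) (y := y) hb
  have c4 := s0low_eq (y := y) hb hP l
  have c5 := s0low_eq (y := y) hg hP l
  unfold pd at c1 c4 c5
  rw [hv, oneForm_add, oneForm_add, low_add, oneForm_smul, oneForm_smul, low_smul, c2, c1] at h1
  rw [hWv, low_add, low_smul, low_smul, oneForm_add, oneForm_smul, oneForm_smul, c3, c4]
  rw [Real.exp_neg]
  have c6 : s0low a g x y l = (fderiv ℝ (fun z => g z l) x y
    - fderiv ℝ (fun z => oneForm (g z) y) x (Pi.single l 1)) / 2 := by linarith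
  rw [c6, ← alph_sq hA hy]
  have he := Real.exp_pos (oneForm (b x) y / alph (a x) y)
  clear c1 c2 c3 c4 c5 c6 hv hWv hW hs hpd
  clear_value D
  generalize Real.exp (oneForm (b x) y / alph (a x) y) = e at *
  generalize alph (a x) y = α at *
  generalize oneForm (b x) y = β at *
  generalize fderiv ℝ (fun z => oneForm (b z) y) x y = β' at *
  generalize fderiv ℝ (fun z => oneForm (b z) y) x (Pi.single l 1) = βl at *
  generalize fderiv ℝ (fun z => nsq (a z) y) x y = E' at *
  generalize fderiv ℝ (fun z => nsq (a z) y) x (Pi.single l 1) = El at *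
  generalize fderiv ℝ (fun z => low (a z) y l) x y = ω' at *
  generalize fderiv ℝ (fun z => g z l) x y = gl' at *
  generalize fderiv ℝ (fun z => b z l) x y = bl' at *
  generalize fderiv ℝ (fun z => oneForm (g z) y) x (Pi.single l 1) = γl at *
  generalize oneForm (low (a x) y) D = m1 at *
  generalize low (a x) D l = m2 at *
  generalize low (a x) y l = m3 at *
  generalize oneForm (b x) D = m4 at *
  generalize oneForm (b x) (cvec a x y) = m5 at *
  generalize b x l = bl at *
  have hα : α ≠ 0 := hp.ne'
  have he0 : e ≠ 0 := he.ne'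
  linear_combination (norm := skip) (-(α ^ 3 / e)) * h1
  field_simp
  ring

end field2

/-! ### Algebraic part at a fixed point -/

section alg
variable {n : ℕ}

/-- restriction to a circle is of the form `A(p) + q B(p)` -/
def CircPoly (e1 e2 : Fin n → ℝ) (f : (Fin n → ℝ) → ℝ) : Prop :=
  ∃ A B : Polynomial ℝ, ∀ p q : ℝ, p ^ 2 + q ^ 2 = 1 →
    f (p • e1 + q • e2) = A.eval p + q * B.eval p

lemma CircPoly.const (e1 e2 : Fin n → ℝ) (c : ℝ) : CircPoly e1 e2 fun _ => c :=
  ⟨Polynomial.C c, 0, by simp⟩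

lemma CircPoly.coord (e1 e2 : Fin n → ℝ) (i : Fin n) : CircPoly e1 e2 fun y => y i :=
  ⟨Polynomial.C (e1 i) * Polynomial.X, Polynomial.C (e2 i), by
    intro p q _; simp; ring⟩

lemma CircPoly.add {e1 e2 : Fin n → ℝ} {f g : (Fin n → ℝ) → ℝ} (hf : CircPoly e1 e2 f)
    (hg : CircPoly e1 e2 g) : CircPoly e1 e2 fun y => f y + g y := by
  obtain ⟨A, B, h⟩ := hf
  obtain ⟨A', B', h'⟩ := hg
  refine ⟨A + A', B + B', fun p q hpq => ?_⟩
  beta_reduce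
  rw [h p q hpq, h' p q hpq]; simp; ring

lemma CircPoly.mul {e1 e2 : Fin n → ℝ} {f g : (Fin n → ℝ) → ℝ} (hf : CircPoly e1 e2 f)
    (hg : CircPoly e1 e2 g) : CircPoly e1 e2 fun y => f y * g y := by
  obtain ⟨A, B, h⟩ := hf
  obtain ⟨A', B', h'⟩ := hg
  refine ⟨A * A' + (1 - Polynomial.X ^ 2) * B * B', A * B' + B * A', fun p q hpq => ?_⟩
  beta_reduce
  rw [h p q hpq, h' p q hpq]
  have : q ^ 2 = 1 - p ^ 2 := by linarith
  simp
  linear_combination (B.eval p * B'.eval p) * this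

lemma CircPoly.sum {e1 e2 : Fin n → ℝ} {ι : Type} (s : Finset ι) {f : ι → (Fin n → ℝ) → ℝ}
    (hf : ∀ i, CircPoly e1 e2 (f i)) : CircPoly e1 e2 fun y => ∑ i ∈ s, f i y := by
  classical
  induction s using Finset.induction_on with
  | empty => simpa using CircPoly.const e1 e2 0
  | insert i s hi ih =>
    simp only [Finset.sum_insert hi]
    exact (hf i).add ih

lemma CircPoly.neg {e1 e2 : Fin n → ℝ} {f : (Fin n → ℝ) → ℝ} (hf : CircPoly e1 e2 f) :
    CircPoly e1 e2 fun y => - f y := by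
  simpa using (CircPoly.const e1 e2 (-1)).mul hf

lemma CircPoly.sub {e1 e2 : Fin n → ℝ} {f g : (Fin n → ℝ) → ℝ} (hf : CircPoly e1 e2 f)
    (hg : CircPoly e1 e2 g) : CircPoly e1 e2 fun y => f y - g y := by
  simpa [sub_eq_add_neg] using hf.add hg.neg

lemma CircPoly.mvpoly (e1 e2 : Fin n → ℝ) (P : MvPolynomial (Fin n) ℝ) :
    CircPoly e1 e2 fun y => MvPolynomial.eval y P := by
  induction P using MvPolynomial.induction_on with
  | C c => simpa using CircPoly.const e1 e2 c
  | add p q hp hq => simpa using hp.add hq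
  | mul_X p i hp => simpa using hp.mul (CircPoly.coord e1 e2 i)

lemma CircPoly.oneForm (e1 e2 : Fin n → ℝ) (b : Fin n → ℝ) : CircPoly e1 e2 (oneForm b) := by
  unfold _root_.oneForm
  exact CircPoly.sum _ fun i => (CircPoly.const e1 e2 (b i)).mul (CircPoly.coord e1 e2 i)

/-- A multiple of `cosh` which agrees with a polynomial on an interval vanishes. -/
lemma cosh_poly {B : Polynomial ℝ} {c κ : ℝ} (hκ : 0 < κ)
    (h : ∀ p : ℝ, -1 < p → p < 1 → c * Real.cosh (κ * p) = B.eval p) : c = 0 := by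
  have h1 : AnalyticOnNhd ℝ (fun p : ℝ => c * Real.cosh (κ * p)) univ := by
    have : (fun p : ℝ => c * Real.cosh (κ * p)) =
      fun p : ℝ => c * ((Real.exp (κ * p) + Real.exp (-(κ * p))) / 2) := by
      funext p; rw [Real.cosh_eq]
    rw [this]
    intro p _
    fun_prop
  have h2 : AnalyticOnNhd ℝ (fun p : ℝ => B.eval p) univ :=
    AnalyticOnNhd.eval_polynomial B
  have h3 : (fun p : ℝ => c * Real.cosh (κ * p)) = fun p : ℝ => B.eval p := by
    refine h1.eq_of_eventuallyEq h2 (z₀ := 0) ?_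
    filter_upwards [Ioo_mem_nhds (show (-1:ℝ) < 0 by norm_num) (show (0:ℝ) < 1 by norm_num)] with p hp
    exact h p hp.1 hp.2
  have h4 := Polynomial.tendsto_div_exp_atTop (B.comp (Polynomial.C κ⁻¹ * Polynomial.X))
  have h5 : ∀ t : ℝ, (B.comp (Polynomial.C κ⁻¹ * Polynomial.X)).eval t / Real.exp t =
      c * ((1 + Real.exp (-t) * Real.exp (-t)) / 2) := by
    intro t
    have := congrFun h3 (κ⁻¹ * t)
    beta_reduce at this
    rw [Polynomial.eval_comp]
    simp only [Polynomial.eval_mul, Polynomial.eval_C, Polynomial.eval_X]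
    rw [← this, mul_inv_cancel_left₀ hκ.ne', Real.cosh_eq, Real.exp_neg]
    field_simp
  simp only [h5] at h4
  have h6 : Filter.Tendsto (fun t : ℝ => c * ((1 + Real.exp (-t) * Real.exp (-t)) / 2))
      Filter.atTop (nhds (c * ((1 + 0 * 0) / 2))) :=
    (((Real.tendsto_exp_neg_atTop_nhds_zero.mul
      Real.tendsto_exp_neg_atTop_nhds_zero).const_add 1).div_const 2).const_mul c
  have := tendsto_nhds_unique h4 h6
  linarith

end alg

section core
variable {n : ℕ}

lemma oneForm_anti {S : Fin n → Fin n → ℝ} (hS : ∀ i j, S i j = - S j i) (u v : Fin n → ℝ) :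
    oneForm (fun l => oneForm (S l) u) v = - oneForm (fun l => oneForm (S l) v) u := by
  simp only [oneForm, Finset.sum_mul, ← Finset.sum_neg_distrib]
  rw [Finset.sum_comm]
  refine Finset.sum_congr rfl fun i _ => Finset.sum_congr rfl fun j _ => ?_
  rw [hS j i]; ring

/-- An antisymmetric form killed by the kernel of a nonzero covector vanishes. -/
lemma anti_zero {S : Fin n → Fin n → ℝ} (hS : ∀ i j, S i j = - S j i) {b u : Fin n → ℝ}
    (hu : 0 < oneForm b u) (h : ∀ w, oneForm b w = 0 → ∀ l, oneForm (S l) w = 0) (i j : Fin n) :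
    S i j = 0 := by
  -- the value at `u`
  have hd : ∀ v : Fin n → ℝ, ∃ w, oneForm b w = 0 ∧ v = (oneForm b v / oneForm b u) • u + w := by
    intro v
    refine ⟨v + (-(oneForm b v / oneForm b u)) • u, ?_, ?_⟩
    · rw [oneForm_add, oneForm_smul]; field_simp; ring
    · ext k; simp
  have huu : oneForm (fun l => oneForm (S l) u) u = 0 := by
    have := oneForm_anti hS u u; linarith
  have huv : ∀ v, oneForm (fun l => oneForm (S l) u) v = 0 := by
    intro v
    obtain ⟨w, hw, hv⟩ := hd v
    rw [hv, oneForm_add, oneForm_smul, huu, oneForm_anti hS u w]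
    have : (fun l => oneForm (S l) w) = fun _ => 0 := funext fun l => h w hw l
    rw [this]; simp [oneForm]
  have hu2 : ∀ l, oneForm (S l) u = 0 := by
    intro l
    have := huv (Pi.single l 1)
    rwa [oneForm_single] at this
  have h3 : ∀ v l, oneForm (S l) v = 0 := by
    intro v l
    obtain ⟨w, hw, hv⟩ := hd v
    rw [hv, oneForm_add, oneForm_smul, hu2, h w hw]; simp
  have := h3 (Pi.single j 1) i
  rwa [oneForm_single] at this

lemma exists_ker (hn : 2 ≤ n) {b : Fin n → ℝ} (hb : b ≠ 0) : ∃ w, w ≠ 0 ∧ oneForm b w = 0 := by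
  obtain ⟨i, hi⟩ := Function.ne_iff.1 hb
  have : Nontrivial (Fin n) := Fin.nontrivial_iff_two_le.2 hn
  obtain ⟨j, hj⟩ := exists_ne i
  refine ⟨b i • Pi.single j 1 + (-b j) • Pi.single i 1, ?_, ?_⟩
  · intro h
    have := congrFun h j
    simp [hj] at this
    exact hi this
  · rw [oneForm_add, oneForm_smul, oneForm_smul, oneForm_single, oneForm_single]; ring

lemma low_neg' (A : Matrix (Fin n) (Fin n) ℝ) (y : Fin n → ℝ) (l : Fin n) :
    low A (-y) l = - low A y l := by simp [low]

lemma oneForm_neg' (b y : Fin n → ℝ) : oneForm b (-y) = - oneForm b y := by simp [oneForm]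

lemma nsq_neg' (A : Matrix (Fin n) (Fin n) ℝ) (y : Fin n → ℝ) : nsq A (-y) = nsq A y := by
  simp [nsq]

lemma core (hn : 2 ≤ n) {A : Matrix (Fin n) (Fin n) ℝ} (hA : A.PosDef) {b : Fin n → ℝ}
    (hb : b ≠ 0) {S T : Fin n → Fin n → ℝ} {R : Matrix (Fin n) (Fin n) ℝ} (hS : ∀ i j, S i j = - S j i)
    (hT : ∀ i j, T i j = - T j i) (hR : ∀ i j, R i j = R j i)
    (W : (Fin n → ℝ) → Fin n → ℝ) (hWc : ∀ e1 e2 l, CircPoly e1 e2 fun y => W y l)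
    (hWe : ∀ y, W (-y) = W y)
    (heq : ∀ y, y ≠ 0 → ∀ l,
      2 * (1 - oneForm b y / alph A y) * low A (W y) l
      + 2 * (b l - oneForm b y / alph A y * (low A y l / alph A y)) * oneForm b (W y)
      = alph A y ^ 3 * (2 * oneForm (S l) y
        + (b l - oneForm b y / alph A y * (low A y l / alph A y)) * nsq R y / alph A y
        + 2 * Real.exp (-(oneForm b y / alph A y)) * oneForm (T l) y)) :
    ∀ i j, S i j = 0 ∧ T i j = 0 ∧ R i j = 0 := by
  have halph : ∀ y, alph A (-y) = alph A y := fun y => by rw [alph_eq, alph_eq, nsq_neg']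
  -- odd part
  have hodd : ∀ y, y ≠ 0 → ∀ l, -(oneForm b y / alph A y) * low A (W y) l =
      alph A y ^ 3 * (oneForm (S l) y + Real.cosh (oneForm b y / alph A y) * oneForm (T l) y) := by
    intro y hy l
    have e1 := heq y hy l
    have e2 := heq (-y) (neg_ne_zero.2 hy) l
    rw [hWe, halph, oneForm_neg', oneForm_neg', oneForm_neg', low_neg', nsq_neg', neg_div, neg_div,
      neg_neg] at e2
    rw [Real.cosh_eq]
    linear_combination (e1 - e2) / 4
  set u := raise A b with hu
  have hlu : low A u = b := low_raise hA b
  have hu0 : u ≠ 0 := by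
    intro h
    apply hb
    rw [← hlu, h]; ext l; simp [low]
  have hB : 0 < nsq A u := nsq_pos hA hu0
  have hbu : oneForm b u = nsq A u := by rw [nsq_eq, hlu]
  have hbu0 : 0 < oneForm b u := by rw [hbu]; exact hB
  have hκ : 0 < Real.sqrt (nsq A u) := Real.sqrt_pos.2 hB
  have hκ2 : Real.sqrt (nsq A u) ^ 2 = nsq A u := Real.sq_sqrt hB.le
  set κ := Real.sqrt (nsq A u) with hκdef
  set e1 : Fin n → ℝ := κ⁻¹ • u with he1
  have hbe1 : oneForm b e1 = κ := by
    rw [he1, oneForm_smul, hbu, ← hκ2]; field_simp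
  have hle1 : ∀ v, oneForm (low A e1) v = κ⁻¹ * oneForm b v := by
    intro v
    have : low A e1 = fun l => κ⁻¹ * b l := by
      funext l; rw [he1, low_smul, hlu]
    rw [this, oneForm_smul_left]
  have hne1 : nsq A e1 = 1 := by
    rw [nsq_eq, hle1, hbe1]; field_simp
  clear_value e1
  have hcirc : ∀ e2, nsq A e2 = 1 → oneForm b e2 = 0 → ∀ p q : ℝ,
      nsq A (p • e1 + q • e2) = p ^ 2 + q ^ 2 ∧ oneForm b (p • e1 + q • e2) = κ * p := by
    intro e2 h1 h2 p q
    constructor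
    · have : low A (p • e1) = fun l => p * low A e1 l := funext fun l => low_smul A e1 p l
      rw [nsq_add (posDef_symm hA), nsq_smul, nsq_smul, this, oneForm_smul_left, oneForm_smul,
        hle1, h2, hne1, h1]
      ring
    · rw [oneForm_add, oneForm_smul, oneForm_smul, hbe1, h2]; ring
  have hT2 : ∀ e2, nsq A e2 = 1 → oneForm b e2 = 0 → ∀ l, oneForm (T l) e2 = 0 := by
    intro e2 h1 h2 l
    have hc : CircPoly e1 e2 fun y => -(oneForm b y * low A (W y) l) - oneForm (S l) y := by
      refine CircPoly.sub (CircPoly.neg (CircPoly.mul (CircPoly.oneForm e1 e2 b) ?_))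
        (CircPoly.oneForm e1 e2 (S l))
      unfold low
      exact CircPoly.sum _ fun m => (CircPoly.const e1 e2 (A l m)).mul (hWc e1 e2 m)
    obtain ⟨P, Q, hPQ⟩ := hc
    have hmain : ∀ p q : ℝ, p ^ 2 + q ^ 2 = 1 →
        Real.cosh (κ * p) * (p * oneForm (T l) e1 + q * oneForm (T l) e2)
          = P.eval p + q * Q.eval p := by
      intro p q hpq
      obtain ⟨c1, c2⟩ := hcirc e2 h1 h2 p q
      rw [hpq] at c1
      have hal : alph A (p • e1 + q • e2) = 1 := by rw [alph_eq, c1, Real.sqrt_one]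
      have hy : p • e1 + q • e2 ≠ 0 := by
        intro h; rw [h, nsq_zero] at c1; exact zero_ne_one c1
      have h3 := hodd _ hy l
      have h4 := hPQ p q hpq
      beta_reduce at h4
      rw [hal, c2, div_one, oneForm_add (T l), oneForm_smul, oneForm_smul] at h3
      rw [← h4, c2]
      linarith
    refine cosh_poly (B := Q) hκ fun p hp1 hp2 => ?_
    have hpos : 0 < 1 - p ^ 2 := by nlinarith
    have hq := Real.sqrt_pos.2 hpos
    have hq2 := Real.sq_sqrt hpos.le
    have m1 := hmain p (Real.sqrt (1 - p ^ 2)) (by linarith)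
    have m2 := hmain p (-Real.sqrt (1 - p ^ 2)) (by rw [neg_sq]; linarith)
    apply mul_left_cancel₀ hq.ne'
    linear_combination (m1 - m2) / 2
  have hnorm : ∀ w, w ≠ 0 → oneForm b w = 0 → ∃ e2 : Fin n → ℝ, ∃ c : ℝ,
      nsq A e2 = 1 ∧ oneForm b e2 = 0 ∧ w = c • e2 := by
    intro w hw h
    have hp := Real.sqrt_pos.2 (nsq_pos hA hw)
    have hp2 := Real.sq_sqrt (nsq_pos hA hw).le
    refine ⟨(Real.sqrt (nsq A w))⁻¹ • w, Real.sqrt (nsq A w), ?_, ?_, ?_⟩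
    · rw [nsq_smul, inv_pow, hp2, inv_mul_cancel₀ (nsq_pos hA hw).ne']
    · rw [oneForm_smul, h, mul_zero]
    · rw [smul_smul, mul_inv_cancel₀ hp.ne', one_smul]
  have hTz : ∀ i j, T i j = 0 := by
    refine anti_zero hT hbu0 fun w hw l => ?_
    by_cases h0 : w = 0
    · rw [h0]; simp [oneForm]
    obtain ⟨e2, c, h1, h2, rfl⟩ := hnorm w h0 hw
    rw [oneForm_smul, hT2 e2 h1 h2 l, mul_zero]
  have hTf : ∀ l y, oneForm (T l) y = 0 := by
    intro l y; simp [oneForm, hTz]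
  have hSz : ∀ i j, S i j = 0 := by
    refine anti_zero hS hbu0 fun w hw l => ?_
    by_cases h0 : w = 0
    · rw [h0]; simp [oneForm]
    have h3 := hodd w h0 l
    rw [hw, hTf] at h3
    have := (alph_pos hA h0).ne'
    simpa [this] using h3.symm
  have hSf : ∀ l y, oneForm (S l) y = 0 := by
    intro l y; simp [oneForm, hSz]
  -- vanishing of r
  have hr : ∀ e2, nsq A e2 = 1 → oneForm b e2 = 0 → ∀ p q : ℝ, p ≠ 0 → q ≠ 0 →
      nsq R (p • e1 + q • e2) = 0 := by
    intro e2 h1 h2 p q hp hq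
    obtain ⟨c1, c2⟩ := hcirc e2 h1 h2 p q
    have hp2 : 0 < p ^ 2 := by positivity
    have hq2 : 0 < q ^ 2 := by positivity
    have hy : p • e1 + q • e2 ≠ 0 := by
      intro h; rw [h, nsq_zero] at c1; linarith
    generalize hyd : p • e1 + q • e2 = y at *
    have hal := alph_pos hA hy
    have hal2 := alph_sq hA hy
    have hlow : ∀ l, low A (W y) l = 0 := by
      intro l
      have h3 := hodd y hy l
      rw [hSf, hTf, c2] at h3
      have : -(κ * p / alph A y) ≠ 0 := by
        rw [neg_ne_zero]; exact div_ne_zero (mul_ne_zero hκ.ne' hp) hal.ne'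
      simpa [this, hp, hκ.ne', hal.ne'] using h3
    have hbW : oneForm b (W y) = 0 := by
      rw [← hlu, low_comm (posDef_symm hA)]
      simp [oneForm, hlow]
    have h5 : ∀ l, nsq R y * (nsq A y * b l + (- oneForm b y) * low A y l) = 0 := by
      intro l
      have h4 := heq y hy l
      rw [hlow, hbW, hSf, hTf] at h4
      field_simp at h4
      rw [← hal2]
      have ha2 : alph A y ^ 2 ≠ 0 := by positivity
      apply mul_left_cancel₀ ha2
      linear_combination -h4
    have h6 : nsq R y * (nsq A y * nsq A u - oneForm b y ^ 2) = 0 := by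
      have h7 : oneForm (fun l => nsq R y * (nsq A y * b l + (- oneForm b y) * low A y l)) u = 0 := by
        simp only [h5]; simp [oneForm]
      rw [oneForm_smul_left, oneForm_add_left, oneForm_smul_left, oneForm_smul_left,
        low_comm (posDef_symm hA), hlu, hbu] at h7
      linear_combination h7
    have h8 : nsq A y * nsq A u - oneForm b y ^ 2 = q ^ 2 * nsq A u := by
      rw [c1, c2, ← hκ2]; ring
    rw [h8] at h6
    exact (mul_eq_zero.1 h6).resolve_right (by positivity)
  have hRall : ∀ e2, nsq A e2 = 1 → oneForm b e2 = 0 → ∀ p q : ℝ,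
      nsq R (p • e1 + q • e2) = 0 := by
    intro e2 h1 h2 p q
    have hex : ∀ p q : ℝ, nsq R (p • e1 + q • e2) =
        p ^ 2 * nsq R e1 + 2 * p * q * oneForm (low R e1) e2 + q ^ 2 * nsq R e2 := by
      intro p q
      have : low R (p • e1) = fun l => p * low R e1 l := funext fun l => low_smul R e1 p l
      rw [nsq_add hR, nsq_smul, nsq_smul, this, oneForm_smul_left, oneForm_smul]
      ring
    have a1 := hr e2 h1 h2 1 1 (by norm_num) (by norm_num)
    have a2 := hr e2 h1 h2 1 (-1) (by norm_num) (by norm_num)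
    have a3 := hr e2 h1 h2 2 1 (by norm_num) (by norm_num)
    rw [hex] at a1 a2 a3
    have b1 : nsq R e1 = 0 := by linarith
    have b2 : oneForm (low R e1) e2 = 0 := by linarith
    have b3 : nsq R e2 = 0 := by linarith
    rw [hex, b1, b2, b3]; ring
  have hR0 : ∀ y, nsq R y = 0 := by
    intro y
    have hdec : y = (oneForm b y / κ) • e1 + (y + (-(oneForm b y / κ)) • e1) := by
      ext k; simp
    have hker : oneForm b (y + (-(oneForm b y / κ)) • e1) = 0 := by
      rw [oneForm_add, oneForm_smul, hbe1]; field_simp; ring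
    by_cases h0 : y + (-(oneForm b y / κ)) • e1 = 0
    · obtain ⟨w, hw0, hw⟩ := exists_ker hn hb
      obtain ⟨e2, c, h1, h2, -⟩ := hnorm w hw0 hw
      rw [hdec, h0]
      have := hRall e2 h1 h2 (oneForm b y / κ) 0
      rwa [zero_smul] at this
    · obtain ⟨e2, c, h1, h2, h3⟩ := hnorm _ h0 hker
      rw [hdec, h3]
      exact hRall e2 h1 h2 _ _
  intro i j
  refine ⟨hSz i j, hTz i j, ?_⟩
  have := nsq_add hR (Pi.single j 1) (Pi.single i 1)
  rw [hR0, hR0, hR0, oneForm_single, low_single] at this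
  linarith

end core
/-- if `F = α e^{β/α} + γ` is of Douglas type then `β` is parallel and `γ` is closed. -/
theorem statement18
    (n : ℕ) (hn : 2 ≤ n)
    (U : Set (Fin n → ℝ)) (hU : IsOpen U)
    (a : (Fin n → ℝ) → Matrix (Fin n) (Fin n) ℝ)
    (haS : ∀ i j, ContDiffOn ℝ (⊤ : ℕ∞) (fun x => a x i j) U)
    (haP : ∀ x ∈ U, (a x).PosDef)
    (bv gv : (Fin n → ℝ) → Fin n → ℝ)
    (hbS : ∀ i, ContDiffOn ℝ (⊤ : ℕ∞) (fun x => bv x i) U)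
    (hgS : ∀ i, ContDiffOn ℝ (⊤ : ℕ∞) (fun x => gv x i) U)
    (hb1 : ∀ x ∈ U, Real.sqrt (quadInv (a x) (bv x) (bv x)) < 1)
    (hg1 : ∀ x ∈ U, Real.sqrt (quadInv (a x) (gv x) (gv x)) < Real.exp (-1))
    (hbne : ∀ x ∈ U, bv x ≠ 0)
    (hD : ∀ x ∈ U, ∀ i j : Fin n,
      ∃ P : MvPolynomial (Fin n) ℝ, P.IsHomogeneous 3 ∧
        ∀ y : Fin n → ℝ, y ≠ 0 →
          sprayF (fun z w => alph (a z) w * Real.exp (oneForm (bv z) w / alph (a z) w)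
              + oneForm (gv z) w) x y i * y j
            - sprayF (fun z w => alph (a z) w * Real.exp (oneForm (bv z) w / alph (a z) w)
              + oneForm (gv z) w) x y j * y i = MvPolynomial.eval y P) :
    ∀ x ∈ U, ∀ i j : Fin n, covD a bv x i j = 0 ∧ sSym a gv x i j = 0 := by
  intro x hx
  have hnx := hU.mem_nhds hx
  have ha : ∀ i j, DifferentiableAt ℝ (fun z => a z i j) x := fun i j =>
    ((haS i j).contDiffAt hnx).differentiableAt (by simp)
  have hb : ∀ i, DifferentiableAt ℝ (fun z => bv z i) x := fun i =>
    ((hbS i).contDiffAt hnx).differentiableAt (by simp)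
  have hg : ∀ i, DifferentiableAt ℝ (fun z => gv z i) x := fun i =>
    ((hgS i).contDiffAt hnx).differentiableAt (by simp)
  have hP : ∀ᶠ z in nhds x, (a z).PosDef := by
    filter_upwards [hnx] with z hz using haP z hz
  choose P hPh hPe using hD x hx
  let W : (Fin n → ℝ) → Fin n → ℝ := fun y m =>
    ∑ j, (MvPolynomial.eval y (P m j) - (alphaG a x y m * y j - alphaG a x y j * y m))
      * low (a x) y j
  have hGc : ∀ (e1 e2 : Fin n → ℝ) m, CircPoly e1 e2 fun y => alphaG a x y m := by
    intro e1 e2 m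
    unfold alphaG
    exact (CircPoly.const e1 e2 _).mul (CircPoly.sum _ fun j => CircPoly.sum _ fun k =>
      ((CircPoly.const e1 e2 _).mul (CircPoly.coord e1 e2 j)).mul (CircPoly.coord e1 e2 k))
  have hWc : ∀ (e1 e2 : Fin n → ℝ) l, CircPoly e1 e2 fun y => W y l := by
    intro e1 e2 l
    refine CircPoly.sum _ fun j => CircPoly.mul (CircPoly.sub (CircPoly.mvpoly e1 e2 _)
      (CircPoly.sub ((hGc e1 e2 l).mul (CircPoly.coord e1 e2 j))
        ((hGc e1 e2 j).mul (CircPoly.coord e1 e2 l)))) (CircPoly.oneForm e1 e2 (a x j))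
  have hGe : ∀ y m, alphaG a x (-y) m = alphaG a x y m := by
    intro y m; simp [alphaG]
  have hPn : ∀ y m j, MvPolynomial.eval (-y) (P m j) = - MvPolynomial.eval y (P m j) := by
    intro y m j
    rw [MvPolynomial.eval_eq', MvPolynomial.eval_eq', ← Finset.sum_neg_distrib]
    refine Finset.sum_congr rfl fun d hd => ?_
    have hd3 : ∑ i, d i = 3 := by
      rw [← Finsupp.degree_eq_sum, Finsupp.degree_eq_weight_one]
      exact hPh m j (MvPolynomial.mem_support_iff.1 hd)
    have : ∏ i, (-y) i ^ d i = (-1) ^ (∑ i, d i) * ∏ i, y i ^ d i := by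
      rw [← Finset.prod_pow_eq_pow_sum, ← Finset.prod_mul_distrib]
      exact Finset.prod_congr rfl fun i _ => by rw [Pi.neg_apply, neg_pow]
    rw [this, hd3]
    ring
  have hWe : ∀ y, W (-y) = W y := by
    intro y
    funext m
    refine Finset.sum_congr rfl fun j _ => ?_
    rw [hPn, hGe, hGe, low_neg', Pi.neg_apply, Pi.neg_apply]
    ring
  have hres := core hn (haP x hx) (hbne x hx) (S := sSym a bv x) (T := sSym a gv x)
    (R := Matrix.of (rSym a bv x)) (fun i j => by simp only [sSym]; ring)
    (fun i j => by simp only [sSym]; ring)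
    (fun i j => by simp only [Matrix.of_apply, rSym]; ring) W hWc hWe
    (by
      intro y hy l
      refine key_eq ha hb hg hP hy (hb1 x hx) (hg1 x hx) (W y) ?_ l
      intro m
      have h1 : W y m = ∑ j, ((sprayF (fun z w => Ff (a z) (bv z) (gv z) w) x y m
          - alphaG a x y m) * (low (a x) y j * y j)
          - low (a x) y j * (sprayF (fun z w => Ff (a z) (bv z) (gv z) w) x y j
          - alphaG a x y j) * y m) := by
        refine Finset.sum_congr rfl fun j _ => ?_
        rw [← hPe m j y hy]
        simp only [Ff]
        ring
      rw [h1, Finset.sum_sub_distrib, ← Finset.mul_sum, ← Finset.sum_mul, nsq_eq]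
      simp only [oneForm]
      ring)
  intro i j
  obtain ⟨h1, h2, h3⟩ := hres i j
  refine ⟨?_, h2⟩
  simp only [Matrix.of_apply, rSym] at h3
  simp only [sSym] at h1
  linarith
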